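/- arXiv:2107.08294 — 5 statements merged into one kernel-verified Lean document; each statement's English description precedes it below -/
import Mathlib

section
/- Fix integers K ≥ 1, k ∈ {1,…,K}, and positive integers N, M_k, N_1,…,N_k; fix a matrix H ∈ ℂ^{M_k×N}, matrices Ψ_{k'} ∈ ℂ^{N×N_{k'}} for k' = 1,…,k, and reals L > 0, σ² > 0. For Hermitian positive semi-definite matrices X_{k'} ∈ ℂ^{N_{k'}×N_{k'}} (k' = 1,…,k) define the private rate R_k(X_1,…,X_k) = log₂ det( I + (1/L) H Ψ_k X_k Ψ_k^H H^H [ σ² I + (1/L) H ( Σ_{k'=1}^{k−1} Ψ_{k'} X_{k'} Ψ_{k'}^H ) H^H ]^{-1} ). Fix Hermitian positive semi-definite base points X̆_{k'} and Hermitian direction matrices V_{k'} (k' = 1,…,k), set Q̆ = Σ_{k'=1}^{k−1} Ψ_{k'} X̆_{k'} Ψ_{k'}^H, and define the approximation R̃_k(X_1,…,X_k) = log₂ det( I + (1/(Lσ²)) H ( Σ_{k'=1}^{k} Ψ_{k'} X_{k'} Ψ_{k'}^H ) H^H ) − log₂ det( I + (1/(Lσ²)) H Q̆ H^H ) − (1/(Lσ²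 ln 2)) Σ_{k'=1}^{k−1} tr( Ψ_{k'}^H H^H [ I + (1/(Lσ²)) H Q̆ H^H ]^{-1} H Ψ_{k'} ( X_{k'} − X̆_{k'} ) ). Then there exist c > 0 and δ > 0 such that for every h ∈ (0, δ) for which X̆_{k'} + h V_{k'} is positive semi-definite for all k' = 1,…,k, one has | R_k(X̆_1 + hV_1, …, X̆_k + hV_k) − R̃_k(X̆_1 + hV_1, …, X̆_k + hV_k) | ≤ c h². -/
open Matrix
open scoped ComplexOrder

/-- The private rate `R_k` of user `k` (equation (15) of the paper):
`R_k = log₂ det( I + (1/L) H Ψ_k X_k Ψ_kᴴ Hᴴ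
  [σ² I + (1/L) H (Σ_{k'<k} Ψ_{k'} X_{k'} Ψ_{k'}ᴴ) Hᴴ]⁻¹ )`. -/
noncomputable def privateRate (k N Mk : ℕ) (Nk : ℕ → ℕ)
    (H : Matrix (Fin Mk) (Fin N) ℂ)
    (Ψ : (i : ℕ) → Matrix (Fin N) (Fin (Nk i)) ℂ)
    (L s : ℝ)
    (X : (i : ℕ) → Matrix (Fin (Nk i)) (Fin (Nk i)) ℂ) : ℝ :=
  Real.logb 2
    ((1 + ((1 / L) • (H * (Ψ k * X k * (Ψ k)ᴴ) * Hᴴ)) *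
        (s • (1 : Matrix (Fin Mk) (Fin Mk) ℂ) +
          (1 / L) • (H * (∑ i ∈ Finset.Icc 1 (k - 1), Ψ i * X i * (Ψ i)ᴴ) * Hᴴ))⁻¹).det.re)

/-- The first-order approximation `R̃_k` of the private rate around the base points `Xb`
(equation (19) of the paper). -/
noncomputable def privateRateApprox (k N Mk : ℕ) (Nk : ℕ → ℕ)
    (H : Matrix (Fin Mk) (Fin N) ℂ)
    (Ψ : (i : ℕ) → Matrix (Fin N) (Fin (Nk i)) ℂ)
    (L s : ℝ)
    (Xb X : (i : ℕ) → Matrix (Fin (Nk i)) (Fin (Nk i)) ℂ) : ℝ :=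
  Real.logb 2
      ((1 + (1 / (L * s)) •
          (H * (∑ i ∈ Finset.Icc 1 k, Ψ i * X i * (Ψ i)ᴴ) * Hᴴ)).det.re)
    - Real.logb 2
      ((1 + (1 / (L * s)) •
          (H * (∑ i ∈ Finset.Icc 1 (k - 1), Ψ i * Xb i * (Ψ i)ᴴ) * Hᴴ)).det.re)
    - (1 / (L * s * Real.log 2)) *
        ∑ i ∈ Finset.Icc 1 (k - 1),
          ((Ψ i)ᴴ * Hᴴ *
            ((1 : Matrix (Fin Mk) (Fin Mk) ℂ) + (1 / (L * s)) •
              (H * (∑ j ∈ Finset.Icc 1 (k - 1), Ψ j * Xb j * (Ψ j)ᴴ) * Hᴴ))⁻¹ *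
            H * Ψ i * (X i - Xb i)).trace.re

/-!
Write `C_S` for the noise-normalised covariance `1 + (Lσ²)⁻¹ H (∑_{i ∈ S} Ψ_i X_i Ψ_iᴴ) Hᴴ`. The
matrix inside the determinant of `R_k` is `C_{≤ k} (C_{< k})⁻¹`, so `R_k` is the difference
`log₂ det C_{≤ k} - log₂ det C_{< k}`, and `R̃_k` is obtained from it by linearising
`log₂ det C_{< k}` at the base point. Hence the error is exactly the first-order Taylor remainder of
`log₂ det` at a positive definite matrix. Along a line this remainder is quadratic, because
`det (1 + h M) = 1 + h tr M + O(h²)` and `log (1 + u) = u + O(u²)`.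
-/

open Asymptotics Filter Topology

section LogDet

variable {n : Type*} [Fintype n] [DecidableEq n]

lemma log_one_add_sub_self_isBigO :
    (fun u : ℝ => Real.log (1 + u) - u) =O[𝓝 0] fun u => u ^ 2 := by
  have ofReal_tendsto : Tendsto Complex.ofReal (𝓝 0) (𝓝 0) :=
    Complex.continuous_ofReal.tendsto' 0 0 Complex.ofReal_zero
  have re_complex_log : ∀ u : ℝ, Complex.re (Complex.log (1 + u) - u) = Real.log (1 + u) - u :=
    fun u => by
      rw [Complex.sub_re, Complex.log_re, Complex.ofReal_re, ← Complex.ofReal_one,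
        ← Complex.ofReal_add, Complex.norm_real, Real.norm_eq_abs, Real.log_abs]
  have complex_log : (fun u : ℝ => Complex.log (1 + u) - u) =O[𝓝 0] fun u => u ^ 2 :=
    (Complex.log_sub_self_isBigO.comp_tendsto ofReal_tendsto).trans (isBigO_of_le _ (by simp))
  exact ((Complex.reCLM.isBigO_comp _ _).trans complex_log).congr_left re_complex_log

lemma det_one_add_smul_sub_isBigO {R : Type*} [NormedCommRing R] (M : Matrix n n R) :
    (fun r : R => (1 + r • M).det - 1 - r * M.trace) =O[𝓝 0] fun r => r ^ 2 := by
  obtain ⟨p, hp⟩ : ∃ p : Polynomial R, ∀ r,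
      (1 + r • M).det = 1 + M.trace * r + p.eval r * r ^ 2 := ⟨_, (det_one_add_smul · M)⟩
  have remainder_eq : ∀ r, (1 + r • M).det - 1 - r * M.trace = p.eval r * r ^ 2 := fun r => by
    rw [hp]; ring
  have eval_bounded : (fun r => p.eval r) =O[𝓝 0] fun _ => (1 : ℝ) :=
    (p.continuous.tendsto 0).isBigO_one ℝ
  simp only [remainder_eq]
  simpa using eval_bounded.mul (isBigO_refl (fun r : R => r ^ 2) (𝓝 0)).norm_right

lemma smul_mul_inv_smul {K R : Type*} [Field K] [CommRing R] [Algebra K R] {A : Matrix n n R}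
    (hA : IsUnit A.det) {a : K} (ha : a ≠ 0) (B : Matrix n n R) :
    (a • B) * (a • A)⁻¹ = B * A⁻¹ := by
  have inv_eq : (a • A)⁻¹ = a⁻¹ • A⁻¹ := inv_eq_right_inv <| by
    rw [smul_mul_smul_comm, mul_nonsing_inv _ hA, mul_inv_cancel₀ ha, one_smul]
  rw [inv_eq, smul_mul_smul_comm, mul_inv_cancel₀ ha, one_smul]

variable {𝕜 : Type*} [RCLike 𝕜]

lemma re_det_one_add_smul_sub_isBigO (M : Matrix n n 𝕜) :
    (fun h : ℝ => RCLike.re (1 + h • M).det - 1 - h * RCLike.re M.trace)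
      =O[𝓝 0] fun h => h ^ 2 := by
  have ofReal_tendsto : Tendsto (RCLike.ofReal : ℝ → 𝕜) (𝓝 0) (𝓝 0) :=
    RCLike.continuous_ofReal.tendsto' 0 0 RCLike.ofReal_zero
  have re_eq : ∀ h : ℝ, RCLike.re ((1 + (h : 𝕜) • M).det - 1 - h * M.trace)
      = RCLike.re (1 + h • M).det - 1 - h * RCLike.re M.trace := fun h => by
    rw [map_sub, map_sub, RCLike.one_re, RCLike.re_ofReal_mul,
      ← RCLike.real_smul_eq_coe_smul (K := 𝕜)]
  have det_isBigO :
      (fun h : ℝ => (1 + (h : 𝕜) • M).det - 1 - h * M.trace) =O[𝓝 0] fun h => h ^ 2 :=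
    ((det_one_add_smul_sub_isBigO M).comp_tendsto ofReal_tendsto).trans (isBigO_of_le _ (by simp))
  exact ((RCLike.reCLM.isBigO_comp _ _).trans det_isBigO).congr_left re_eq

lemma log_re_det_one_add_smul_sub_isBigO (M : Matrix n n 𝕜) :
    (fun h : ℝ => Real.log (RCLike.re (1 + h • M).det) - h * RCLike.re M.trace)
      =O[𝓝 0] fun h => h ^ 2 := by
  set u : ℝ → ℝ := fun h => RCLike.re (1 + h • M).det - 1 with hu
  have quadratic : (fun h => u h - h * RCLike.re M.trace) =O[𝓝 0] fun h => h ^ 2 :=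
    re_det_one_add_smul_sub_isBigO M
  have linear : u =O[𝓝 0] fun h => h := by
    have trace_term : (fun h : ℝ => h * RCLike.re M.trace) =O[𝓝 0] fun h => h :=
      (isBigO_const_mul_self (RCLike.re M.trace) (fun h : ℝ => h) (𝓝 0)).congr_left
        fun h => mul_comm _ h
    have sq_isBigO : (fun h : ℝ => h ^ 2) =O[𝓝 0] fun h => h := by
      simpa using (isLittleO_pow_id one_lt_two).isBigO
    simpa using (quadratic.trans sq_isBigO).add trace_term
  have log_remainder : (fun h => Real.log (1 + u h) - u h) =O[𝓝 0] fun h => h ^ 2 :=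
    (log_one_add_sub_self_isBigO.comp_tendsto (linear.trans_tendsto tendsto_id)).trans
      (linear.pow 2)
  refine (log_remainder.add quadratic).congr_left fun h => ?_
  simp only [hu, add_sub_cancel]
  ring

/-- The first-order Taylor remainder at `A` of `log ∘ det`, evaluated at `B`. The real part is only
a coercion: the determinants of positive definite matrices are real. -/
noncomputable def logDetRemainder (A B : Matrix n n 𝕜) : ℝ :=
  Real.log (RCLike.re B.det) - Real.log (RCLike.re A.det) - RCLike.re (A⁻¹ * (B - A)).trace

lemma re_det_mul_of_posDef {A : Matrix n n 𝕜} (hA : A.PosDef) (B : Matrix n n 𝕜) :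
    RCLike.re (A * B).det = RCLike.re A.det * RCLike.re B.det := by
  rw [det_mul, RCLike.mul_re, (RCLike.pos_iff.1 hA.det_pos).2, zero_mul, sub_zero]

lemma logDetRemainder_add_smul_isBigO {A : Matrix n n 𝕜} (hA : A.PosDef) (B : Matrix n n 𝕜) :
    (fun h : ℝ => logDetRemainder A (A + h • B)) =O[𝓝 0] fun h => h ^ 2 := by
  have factor : ∀ h : ℝ, A + h • B = A * (1 + h • (A⁻¹ * B)) := fun h => by
    rw [mul_add, mul_one, mul_smul_comm, mul_nonsing_inv_cancel_left _ _ hA.det_pos.ne'.isUnit]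
  have det_tendsto :
      Tendsto (fun h : ℝ => RCLike.re (1 + h • (A⁻¹ * B)).det) (𝓝 0) (𝓝 1) := by
    refine Continuous.tendsto' ?_ 0 1 (by simp)
    fun_prop
  refine (log_re_det_one_add_smul_sub_isBigO (A⁻¹ * B)).congr' ?_ .rfl
  filter_upwards [det_tendsto.eventually_ne one_ne_zero] with h det_ne_zero
  rw [logDetRemainder, add_sub_cancel_left, factor, re_det_mul_of_posDef hA,
    Real.log_mul (RCLike.pos_iff.1 hA.det_pos).1.ne' det_ne_zero, add_sub_cancel_left,
    mul_smul_comm, trace_smul, RCLike.smul_re]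

lemma logb_re_det_one_add_mul_inv {A B : Matrix n n 𝕜} (hA : A.PosDef) (hAB : (A + B).PosDef)
    (b : ℝ) :
    Real.logb b (RCLike.re (1 + B * A⁻¹).det)
      = Real.logb b (RCLike.re (A + B).det) - Real.logb b (RCLike.re A.det) := by
  have factor : (1 + B * A⁻¹) * A = A + B := by
    rw [add_mul, one_mul, nonsing_inv_mul_cancel_right _ _ hA.det_pos.ne'.isUnit]
  have det_factor : RCLike.re (A + B).det = RCLike.re A.det * RCLike.re (1 + B * A⁻¹).det := by
    rw [← factor, det_mul_comm, re_det_mul_of_posDef hA]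
  have factors_ne_zero : RCLike.re A.det * RCLike.re (1 + B * A⁻¹).det ≠ 0 :=
    det_factor ▸ (RCLike.pos_iff.1 hAB.det_pos).1.ne'
  rw [det_factor, Real.logb_mul (left_ne_zero_of_mul factors_ne_zero)
    (right_ne_zero_of_mul factors_ne_zero), add_sub_cancel_left]

end LogDet

section ReceivedCovariance

variable {R ι m n : Type*} {d : ι → Type*} [CommRing R] [StarRing R] [Fintype n]
  [∀ i, Fintype (d i)]

/-- The noiseless covariance `H (∑_{i ∈ S} Ψ_i X_i Ψ_iᴴ) Hᴴ` seen at the receiver with channel `H`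
when the users in `S` transmit with precoders `Ψ_i` and covariances `X_i`. -/
def receivedCovariance (H : Matrix m n R) (Ψ : ∀ i, Matrix n (d i) R) (S : Finset ι)
    (X : ∀ i, Matrix (d i) (d i) R) : Matrix m m R :=
  H * (∑ i ∈ S, Ψ i * X i * (Ψ i)ᴴ) * Hᴴ

variable (H : Matrix m n R) (Ψ : ∀ i, Matrix n (d i) R) {S : Finset ι}
  (X Y : ∀ i, Matrix (d i) (d i) R)

lemma receivedCovariance_insert [DecidableEq ι] {j : ι} (hj : j ∉ S) :
    receivedCovariance H Ψ (insert j S) X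
      = receivedCovariance H Ψ S X + H * (Ψ j * X j * (Ψ j)ᴴ) * Hᴴ := by
  rw [receivedCovariance, receivedCovariance, Finset.sum_insert hj, add_comm, Matrix.mul_add,
    Matrix.add_mul]

lemma receivedCovariance_add_smul {α : Type*} [CommSemiring α] [Algebra α R] (a : α) :
    receivedCovariance H Ψ S (fun i => X i + a • Y i)
      = receivedCovariance H Ψ S X + a • receivedCovariance H Ψ S Y := by
  simp only [receivedCovariance, Matrix.mul_add, Matrix.add_mul, Finset.sum_add_distrib,
    Matrix.mul_smul, Matrix.smul_mul, ← Finset.smul_sum]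

lemma receivedCovariance_sub :
    receivedCovariance H Ψ S (fun i => X i - Y i)
      = receivedCovariance H Ψ S X - receivedCovariance H Ψ S Y := by
  simp only [receivedCovariance, Matrix.mul_sub, Matrix.sub_mul, Finset.sum_sub_distrib]

lemma sum_trace_eq_trace_mul_receivedCovariance [Fintype m] (M : Matrix m m R) :
    ∑ i ∈ S, ((Ψ i)ᴴ * Hᴴ * M * H * Ψ i * X i).trace
      = (M * receivedCovariance H Ψ S X).trace := by
  rw [receivedCovariance, Matrix.mul_sum, Matrix.sum_mul, Matrix.mul_sum, trace_sum]
  refine Finset.sum_congr rfl fun i _ => ?_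
  calc ((Ψ i)ᴴ * Hᴴ * M * H * Ψ i * X i).trace
    _ = (((Ψ i)ᴴ * Hᴴ) * (M * H * Ψ i * X i)).trace := by simp only [Matrix.mul_assoc]
    _ = ((M * H * Ψ i * X i) * ((Ψ i)ᴴ * Hᴴ)).trace := trace_mul_comm _ _
    _ = (M * (H * (Ψ i * X i * (Ψ i)ᴴ) * Hᴴ)).trace := by simp only [Matrix.mul_assoc]

lemma one_add_smul_receivedCovariance_posDef {𝕜 : Type*} [RCLike 𝕜] [Finite m] [DecidableEq m]
    (H : Matrix m n 𝕜) (Ψ : ∀ i, Matrix n (d i) 𝕜) {X : ∀ i, Matrix (d i) (d i) 𝕜}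
    {a : ℝ} (ha : 0 ≤ a) (hX : ∀ i ∈ S, (X i).PosSemidef) :
    (1 + a • receivedCovariance H Ψ S X).PosDef := by
  have transmitted_posSemidef : (∑ i ∈ S, Ψ i * X i * (Ψ i)ᴴ).PosSemidef :=
    posSemidef_sum S fun i hi => (hX i hi).mul_mul_conjTranspose_same (Ψ i)
  exact PosDef.one.add_posSemidef ((transmitted_posSemidef.mul_mul_conjTranspose_same H).smul ha)

end ReceivedCovariance

section PrivateRate

variable {k N Mk : ℕ} {Nk : ℕ → ℕ} (H : Matrix (Fin Mk) (Fin N) ℂ)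
  (Ψ : (i : ℕ) → Matrix (Fin N) (Fin (Nk i)) ℂ) {L s : ℝ}
  {X : (i : ℕ) → Matrix (Fin (Nk i)) (Fin (Nk i)) ℂ}

lemma privateRate_eq_logb_sub_logb (hk : 1 ≤ k) (hL : 0 < L) (hs : 0 < s)
    (hX : ∀ i ∈ Finset.Icc 1 k, (X i).PosSemidef) :
    privateRate k N Mk Nk H Ψ L s X
      = Real.logb 2 (1 + (1 / (L * s)) • receivedCovariance H Ψ (Finset.Icc 1 k) X).det.re
        - Real.logb 2
          (1 + (1 / (L * s)) • receivedCovariance H Ψ (Finset.Icc 1 (k - 1)) X).det.re := by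
  set A := 1 + (1 / (L * s)) • receivedCovariance H Ψ (Finset.Icc 1 (k - 1)) X with hA_def
  set P := H * (Ψ k * X k * (Ψ k)ᴴ) * Hᴴ with hP_def
  have hscale : s * (1 / (L * s)) = 1 / L := by field_simp
  have users_insert : insert k (Finset.Icc 1 (k - 1)) = Finset.Icc 1 k :=
    Finset.insert_Icc_sub_one_right_eq_Icc hk
  have covariance_add : 1 + (1 / (L * s)) • receivedCovariance H Ψ (Finset.Icc 1 k) X
      = A + (1 / (L * s)) • P := by
    have not_mem : k ∉ Finset.Icc 1 (k - 1) := by rw [Finset.mem_Icc]; omega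
    rw [← users_insert, receivedCovariance_insert H Ψ X not_mem, smul_add, add_assoc]
  have hA : A.PosDef := one_add_smul_receivedCovariance_posDef H Ψ (by positivity) fun i hi =>
    hX i (Finset.Icc_subset_Icc_right (Nat.sub_le k 1) hi)
  have hAP : (A + (1 / (L * s)) • P).PosDef :=
    covariance_add ▸ one_add_smul_receivedCovariance_posDef H Ψ (by positivity) hX
  have noise_eq : s • (1 : Matrix (Fin Mk) (Fin Mk) ℂ)
      + (1 / L) • receivedCovariance H Ψ (Finset.Icc 1 (k - 1)) X = s • A := by
    rw [hA_def, smul_add, smul_smul, hscale]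
  have signal_eq : (1 / L) • P = s • (1 / (L * s)) • P := by rw [smul_smul, hscale]
  rw [privateRate, ← receivedCovariance, ← hP_def, noise_eq, signal_eq,
    smul_mul_inv_smul hA.det_pos.ne'.isUnit hs.ne', covariance_add]
  exact logb_re_det_one_add_mul_inv hA hAP 2

lemma privateRateApprox_eq_logb_sub_logb_add_logDetRemainder
    (Xb : (i : ℕ) → Matrix (Fin (Nk i)) (Fin (Nk i)) ℂ) :
    privateRateApprox k N Mk Nk H Ψ L s Xb X
      = Real.logb 2 (1 + (1 / (L * s)) • receivedCovariance H Ψ (Finset.Icc 1 k) X).det.re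
        - Real.logb 2
          (1 + (1 / (L * s)) • receivedCovariance H Ψ (Finset.Icc 1 (k - 1)) X).det.re
        + logDetRemainder
            (1 + (1 / (L * s)) • receivedCovariance H Ψ (Finset.Icc 1 (k - 1)) Xb)
            (1 + (1 / (L * s)) • receivedCovariance H Ψ (Finset.Icc 1 (k - 1)) X)
          / Real.log 2 := by
  rw [privateRateApprox, ← Complex.re_sum, ← receivedCovariance, ← receivedCovariance,
    sum_trace_eq_trace_mul_receivedCovariance, receivedCovariance_sub, logDetRemainder,
    add_sub_add_left_eq_sub, ← smul_sub, Matrix.mul_smul, trace_smul, RCLike.smul_re]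
  simp only [Real.logb, RCLike.re_eq_complex_re]
  ring

lemma privateRate_sub_privateRateApprox (hk : 1 ≤ k) (hL : 0 < L) (hs : 0 < s)
    (hX : ∀ i ∈ Finset.Icc 1 k, (X i).PosSemidef)
    (Xb : (i : ℕ) → Matrix (Fin (Nk i)) (Fin (Nk i)) ℂ) :
    privateRate k N Mk Nk H Ψ L s X - privateRateApprox k N Mk Nk H Ψ L s Xb X
      = -(logDetRemainder
          (1 + (1 / (L * s)) • receivedCovariance H Ψ (Finset.Icc 1 (k - 1)) Xb)
          (1 + (1 / (L * s)) • receivedCovariance H Ψ (Finset.Icc 1 (k - 1)) X)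
          / Real.log 2) := by
  rw [privateRate_eq_logb_sub_logb H Ψ hk hL hs hX,
    privateRateApprox_eq_logb_sub_logb_add_logDetRemainder, sub_add_cancel_left]

end PrivateRate

/-- Proposition 2, private-rate part: along Hermitian directions `V` that keep the matrices
positive semi-definite, `R̃_k` approximates `R_k` to first order, with quadratic error in `h`. -/
theorem privateRate_first_order (K k N Mk : ℕ) (hK : 1 ≤ K) (hk1 : 1 ≤ k) (hkK : k ≤ K)
    (hN : 0 < N) (hMk : 0 < Mk)
    (Nk : ℕ → ℕ) (hNk : ∀ i ∈ Finset.Icc 1 k, 0 < Nk i)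
    (H : Matrix (Fin Mk) (Fin N) ℂ)
    (Ψ : (i : ℕ) → Matrix (Fin N) (Fin (Nk i)) ℂ)
    (L s : ℝ) (hL : 0 < L) (hs : 0 < s)
    (Xb V : (i : ℕ) → Matrix (Fin (Nk i)) (Fin (Nk i)) ℂ)
    (hXb : ∀ i ∈ Finset.Icc 1 k, (Xb i).PosSemidef)
    (hV : ∀ i ∈ Finset.Icc 1 k, (V i).IsHermitian) :
    ∃ c > (0 : ℝ), ∃ δ > (0 : ℝ), ∀ h : ℝ, 0 < h → h < δ →
      (∀ i ∈ Finset.Icc 1 k, (Xb i + h • V i).PosSemidef) →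
      |privateRate k N Mk Nk H Ψ L s (fun i => Xb i + h • V i)
          - privateRateApprox k N Mk Nk H Ψ L s Xb (fun i => Xb i + h • V i)|
        ≤ c * h ^ 2 := by
  set A := 1 + (1 / (L * s)) • receivedCovariance H Ψ (Finset.Icc 1 (k - 1)) Xb
  set B := (1 / (L * s)) • receivedCovariance H Ψ (Finset.Icc 1 (k - 1)) V
  have hA : A.PosDef := one_add_smul_receivedCovariance_posDef H Ψ (by positivity) fun i hi =>
    hXb i (Finset.Icc_subset_Icc_right (Nat.sub_le k 1) hi)
  have covariance_line : ∀ h : ℝ, 1 + (1 / (L * s)) •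
      receivedCovariance H Ψ (Finset.Icc 1 (k - 1)) (fun i => Xb i + h • V i) = A + h • B := by
    intro h
    rw [receivedCovariance_add_smul, smul_add, smul_comm, ← add_assoc]
  obtain ⟨c, hc, hbound⟩ := (logDetRemainder_add_smul_isBigO hA B).exists_pos
  obtain ⟨δ, hδ, hball⟩ := Metric.eventually_nhds_iff.1 hbound.bound
  have hlog : 0 < Real.log 2 := Real.log_pos one_lt_two
  refine ⟨c / Real.log 2, by positivity, δ, hδ, fun h h_pos h_lt hX => ?_⟩
  have remainder_le : |logDetRemainder A (A + h • B)| ≤ c * h ^ 2 := by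
    simpa using hball (y := h) (by rwa [Real.dist_0_eq_abs, abs_of_pos h_pos])
  rw [privateRate_sub_privateRateApprox H Ψ hk1 hL hs hX, covariance_line, abs_neg, abs_div,
    abs_of_pos hlog, div_mul_eq_mul_div]
  gcongr
end

section
/- Fix integers K ≥ 1, k ∈ {1,…,K}, and positive integers N, M_k, N_1,…,N_k; fix a matrix H ∈ ℂ^{M_k×N}, matrices Ψ_{k'} ∈ ℂ^{N×N_{k'}} for k' = 1,…,k, reals L > 0, σ² > 0, and a Hermitian positive semi-definite matrix Q_c ∈ ℂ^{N×N}. For Hermitian positive semi-definite matrices X_{k'} ∈ ℂ^{N_{k'}×N_{k'}} (k' = 1,…,k) define the common rate R_{k,c}(X_1,…,X_k) = log₂ det( I + (1/L) H Q_c H^H [ σ² I + (1/L) H ( Σ_{k'=1}^{k} Ψ_{k'} X_{k'} Ψ_{k'}^H ) H^H ]^{-1} ). Fix Hermitian positive semi-definite base points X̆_{k'} and Hermitian direction matrices V_{k'} (k' = 1,…,k), set Q̆ = Σ_{k'=1}^{k} Ψ_{k'} X̆_{k'} Ψ_{k'}^H, and define the approximation R̃_{k,c}(X_1,…,X_k)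 = log₂ det( I + (1/(Lσ²)) H Q_c H^H + (1/(Lσ²)) H ( Σ_{k'=1}^{k} Ψ_{k'} X_{k'} Ψ_{k'}^H ) H^H ) − log₂ det( I + (1/(Lσ²)) H Q̆ H^H ) − (1/(Lσ² ln 2)) Σ_{k'=1}^{k} tr( Ψ_{k'}^H H^H [ I + (1/(Lσ²)) H Q̆ H^H ]^{-1} H Ψ_{k'} ( X_{k'} − X̆_{k'} ) ). Then there exist c > 0 and δ > 0 such that for every h ∈ (0, δ) for which X̆_{k'} + h V_{k'} is positive semi-definite for all k' = 1,…,k, one has | R_{k,c}(X̆_1 + hV_1, …, X̆_k + hV_k) − R̃_{k,c}(X̆_1 + hV_1, …, X̆_k + hV_k) | ≤ c h². -/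
open Matrix
open scoped ComplexOrder

/-- The common-message rate `R_{k,c}` of user `k` (equation (16) of the paper):
`R_{k,c} = log₂ det( I + (1/L) H Q_c Hᴴ
  [σ² I + (1/L) H (Σ_{k'≤k} Ψ_{k'} X_{k'} Ψ_{k'}ᴴ) Hᴴ]⁻¹ )`. -/
noncomputable def commonRate (k N Mk : ℕ) (Nk : ℕ → ℕ)
    (H : Matrix (Fin Mk) (Fin N) ℂ)
    (Ψ : (i : ℕ) → Matrix (Fin N) (Fin (Nk i)) ℂ)
    (L s : ℝ) (Qc : Matrix (Fin N) (Fin N) ℂ)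
    (X : (i : ℕ) → Matrix (Fin (Nk i)) (Fin (Nk i)) ℂ) : ℝ :=
  Real.logb 2
    ((1 + ((1 / L) • (H * Qc * Hᴴ)) *
        (s • (1 : Matrix (Fin Mk) (Fin Mk) ℂ) +
          (1 / L) • (H * (∑ i ∈ Finset.Icc 1 k, Ψ i * X i * (Ψ i)ᴴ) * Hᴴ))⁻¹).det.re)

/-- The first-order approximation `R̃_{k,c}` of the common-message rate around the base
points `Xb` (equation (20) of the paper). -/
noncomputable def commonRateApprox (k N Mk : ℕ) (Nk : ℕ → ℕ)
    (H : Matrix (Fin Mk) (Fin N) ℂ)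
    (Ψ : (i : ℕ) → Matrix (Fin N) (Fin (Nk i)) ℂ)
    (L s : ℝ) (Qc : Matrix (Fin N) (Fin N) ℂ)
    (Xb X : (i : ℕ) → Matrix (Fin (Nk i)) (Fin (Nk i)) ℂ) : ℝ :=
  Real.logb 2
      ((1 + (1 / (L * s)) • (H * Qc * Hᴴ) + (1 / (L * s)) •
          (H * (∑ i ∈ Finset.Icc 1 k, Ψ i * X i * (Ψ i)ᴴ) * Hᴴ)).det.re)
    - Real.logb 2
      ((1 + (1 / (L * s)) •
          (H * (∑ i ∈ Finset.Icc 1 k, Ψ i * Xb i * (Ψ i)ᴴ) * Hᴴ)).det.re)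
    - (1 / (L * s * Real.log 2)) *
        ∑ i ∈ Finset.Icc 1 k,
          ((Ψ i)ᴴ * Hᴴ *
            ((1 : Matrix (Fin Mk) (Fin Mk) ℂ) + (1 / (L * s)) •
              (H * (∑ j ∈ Finset.Icc 1 k, Ψ j * Xb j * (Ψ j)ᴴ) * Hᴴ))⁻¹ *
            H * Ψ i * (X i - Xb i)).trace.re

open Asymptotics Filter
open scoped Topology

/-!
Since `I + A B⁻¹ = (B + A) B⁻¹`, the common rate is a difference of two log-determinants, the first
of which also occurs in the approximation. The error is therefore the first-order Taylor remainder
of `log det` at `I + (1/(Lσ²)) H Q̆ Hᴴ`. It is quadratic because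
`det (1 + t B) = 1 + t tr B + O(t²)` and `log (1 + z) = z + O(z²)`.

Along Hermitian directions the determinants stay real, and for small `h` of either sign they stay
nonzero.
-/

theorem exists_pos_forall_norm_le_of_isBigO {E F G : Type*} [SeminormedAddCommGroup E]
    [Norm F] [SeminormedAddCommGroup G] {f : E → F} {g : E → G} (hfg : f =O[𝓝 0] g) :
    ∃ c > (0 : ℝ), ∃ δ > (0 : ℝ), ∀ x, ‖x‖ < δ → ‖f x‖ ≤ c * ‖g x‖ := by
  obtain ⟨c, hc, hbound⟩ := hfg.exists_pos
  obtain ⟨δ, hδ, hball⟩ := Metric.eventually_nhds_iff.1 hbound.bound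
  exact ⟨c, hc, δ, hδ, fun x hx => hball (by rwa [dist_zero_right])⟩

section Inverse

variable {n K : Type*} [Fintype n] [DecidableEq n] [Field K] {B : Matrix n n K}

theorem det_one_add_mul_inv (hB : B.det ≠ 0) (A : Matrix n n K) :
    (1 + A * B⁻¹).det = (A + B).det / B.det := by
  have factor : 1 + A * B⁻¹ = (A + B) * B⁻¹ := by
    rw [add_mul, mul_nonsing_inv _ hB.isUnit, add_comm]
  rw [factor, det_mul, det_nonsing_inv, Ring.inverse_eq_inv', div_eq_mul_inv]

theorem smul_mul_inv_smul_s3 {𝕜 : Type*} [Field 𝕜] [Algebra 𝕜 K] {s : 𝕜} (hs : s ≠ 0)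
    (hB : B.det ≠ 0) (A : Matrix n n K) : (s • A) * (s • B)⁻¹ = A * B⁻¹ := by
  have inv_smul_eq : (s • B)⁻¹ = s⁻¹ • B⁻¹ := by
    refine inv_eq_right_inv ?_
    rw [smul_mul_smul_comm, mul_nonsing_inv _ hB.isUnit, mul_inv_cancel₀ hs, one_smul]
  rw [inv_smul_eq, smul_mul_smul_comm, mul_inv_cancel₀ hs, one_smul]

end Inverse

section LogDet

variable {n : Type*} [Fintype n] [DecidableEq n]

theorem isBigO_det_one_add_smul {𝕜 : Type*} [NormedField 𝕜] (B : Matrix n n 𝕜) :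
    (fun t : 𝕜 => (1 + t • B).det - 1 - (t • B).trace) =O[𝓝 0] fun t => t ^ 2 := by
  obtain ⟨q, hq⟩ : ∃ q : Polynomial 𝕜, ∀ t,
      (1 + t • B).det = 1 + B.trace * t + q.eval t * t ^ 2 :=
    ⟨_, fun t => det_one_add_smul t B⟩
  have q_bounded : (fun t => q.eval t) =O[𝓝 0] fun _ => (1 : 𝕜) :=
    (q.continuous.tendsto 0).isBigO_one 𝕜
  refine (q_bounded.mul (isBigO_refl (fun t => t ^ 2) _)).congr (fun t => ?_) fun t => one_mul _
  rw [hq, trace_smul, smul_eq_mul]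
  ring

theorem eventually_det_add_smul_ne_zero {𝕜 R : Type*} [Semiring 𝕜] [TopologicalSpace 𝕜]
    [CommRing R] [TopologicalSpace R] [IsTopologicalRing R] [T1Space R] [Module 𝕜 R]
    [ContinuousSMul 𝕜 R]
    {A : Matrix n n R} (hA : A.det ≠ 0) (D : Matrix n n R) :
    ∀ᶠ t : 𝕜 in 𝓝 0, (A + t • D).det ≠ 0 := by
  have hcont : Continuous fun t : 𝕜 => (A + t • D).det := by fun_prop
  exact hcont.continuousAt.eventually_ne (by rwa [zero_smul, add_zero])

theorem isBigO_log_norm_one_add_sub_re :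
    (fun z : ℂ => Real.log ‖1 + z‖ - z.re) =O[𝓝 0] fun z => z ^ 2 := by
  refine (isBigO_of_le _ fun z => ?_).trans Complex.log_sub_self_isBigO
  rw [← Complex.log_re, ← Complex.sub_re]
  exact Complex.abs_re_le_norm _

theorem isBigO_log_norm_det_one_add_smul (B : Matrix n n ℂ) :
    (fun t : ℂ => Real.log ‖(1 + t • B).det‖ - (t • B).trace.re) =O[𝓝 0] fun t => t ^ 2 := by
  set z : ℂ → ℂ := fun t => (1 + t • B).det - 1
  have z_linear : (fun t => z t - (t • B).trace) =O[𝓝 0] fun t => t ^ 2 :=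
    isBigO_det_one_add_smul B
  have z_isBigO : z =O[𝓝 0] fun t => t := by
    have sq_isBigO : (fun t : ℂ => t ^ 2) =O[𝓝 0] fun t => t :=
      (isLittleO_pow_id one_lt_two).isBigO
    have trace_isBigO : (fun t : ℂ => (t • B).trace) =O[𝓝 0] fun t => t := by
      simpa only [trace_smul, smul_eq_mul, mul_comm] using
        isBigO_const_mul_self B.trace (fun t => t) (𝓝 0)
    simpa only [sub_add_cancel] using (z_linear.trans sq_isBigO).add trace_isBigO
  have z_tendsto : Tendsto z (𝓝 0) (𝓝 0) := z_isBigO.trans_tendsto tendsto_id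
  have log_part : (fun t => Real.log ‖1 + z t‖ - (z t).re) =O[𝓝 0] fun t => t ^ 2 :=
    (isBigO_log_norm_one_add_sub_re.comp_tendsto z_tendsto).trans (z_isBigO.pow 2)
  have re_part : (fun t => (z t - (t • B).trace).re) =O[𝓝 0] fun t => t ^ 2 :=
    (isBigO_of_le _ fun t => Complex.abs_re_le_norm _).trans z_linear
  refine (log_part.add re_part).congr_left fun t => ?_
  rw [Complex.sub_re (z t), sub_add_sub_cancel, add_sub_cancel]

theorem isBigO_log_norm_det_add_smul {A : Matrix n n ℂ} (hA : A.det ≠ 0) (D : Matrix n n ℂ) :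
    (fun t : ℂ => Real.log ‖(A + t • D).det‖ - Real.log ‖A.det‖ - (A⁻¹ * (t • D)).trace.re)
      =O[𝓝 0] fun t => t ^ 2 := by
  have factor (t : ℂ) : A + t • D = A * (1 + t • (A⁻¹ * D)) := by
    rw [mul_add, mul_one, Matrix.mul_smul, mul_nonsing_inv_cancel_left _ _ hA.isUnit]
  refine (isBigO_log_norm_det_one_add_smul (A⁻¹ * D)).congr' ?_ .rfl
  filter_upwards [eventually_det_add_smul_ne_zero hA D] with t ht
  rw [factor, det_mul] at ht ⊢
  rw [norm_mul, Real.log_mul (norm_ne_zero_iff.2 hA) (norm_ne_zero_iff.2 (right_ne_zero_of_mul ht)),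
    add_sub_cancel_left, Matrix.mul_smul]

end LogDet

section HermitianDet

variable {n : Type*} [Fintype n] [DecidableEq n] {A B : Matrix n n ℂ}

theorem ofReal_re_det_of_isHermitian (hA : A.IsHermitian) : (A.det.re : ℂ) = A.det :=
  Complex.conj_eq_iff_re.1 (by rw [starRingEnd_apply, ← det_conjTranspose, hA.eq])

theorem log_re_det_of_isHermitian (hA : A.IsHermitian) :
    Real.log A.det.re = Real.log ‖A.det‖ := by
  rw [← ofReal_re_det_of_isHermitian hA, Complex.norm_real, Real.norm_eq_abs, Real.log_abs,
    Complex.ofReal_re]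

theorem logb_re_det_one_add_mul_inv_s3 (b : ℝ) (hA : A.IsHermitian) (hB : B.IsHermitian)
    (hB₀ : B.det ≠ 0) (hAB₀ : (A + B).det ≠ 0) :
    Real.logb b (1 + A * B⁻¹).det.re = Real.logb b (A + B).det.re - Real.logb b B.det.re := by
  rw [det_one_add_mul_inv hB₀]
  rw [← ofReal_re_det_of_isHermitian (hA.add hB)] at hAB₀ ⊢
  rw [← ofReal_re_det_of_isHermitian hB] at hB₀ ⊢
  norm_cast at hAB₀ hB₀ ⊢
  exact Real.logb_div hAB₀ hB₀

end HermitianDet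

section SignalCovariance

variable {ι m n R : Type*} {p : ι → Type*} [Fintype n] [∀ i, Fintype (p i)]
  [CommRing R] [StarRing R]

/-- The covariance `H (∑ i ∈ S, Ψ i * X i * (Ψ i)ᴴ) Hᴴ` received through the channel `H` when the
streams `i ∈ S`, with covariances `X i`, are precoded by `Ψ i` and superposed; it is bundled as a
linear map in `X`. -/
def signalCovariance (S : Finset ι) (H : Matrix m n R) (Ψ : ∀ i, Matrix n (p i) R) :
    (∀ i, Matrix (p i) (p i) R) →ₗ[R] Matrix m m R where
  toFun X := H * (∑ i ∈ S, Ψ i * X i * (Ψ i)ᴴ) * Hᴴ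
  map_add' X Y := by
    simp only [Pi.add_apply, Matrix.mul_add, Matrix.add_mul, Finset.sum_add_distrib]
  map_smul' a X := by
    simp only [Pi.smul_apply, Matrix.mul_smul, Matrix.smul_mul, ← Finset.smul_sum,
      RingHom.id_apply]

variable {S : Finset ι} {H : Matrix m n R} {Ψ : ∀ i, Matrix n (p i) R}
  {X : ∀ i, Matrix (p i) (p i) R}

theorem signalCovariance_apply :
    signalCovariance S H Ψ X = H * (∑ i ∈ S, Ψ i * X i * (Ψ i)ᴴ) * Hᴴ :=
  rfl

theorem isHermitian_signalCovariance (hX : ∀ i ∈ S, (X i).IsHermitian) :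
    (signalCovariance S H Ψ X).IsHermitian :=
  isHermitian_mul_mul_conjTranspose H <|
    isSelfAdjoint_sum S fun i hi => isHermitian_mul_mul_conjTranspose (Ψ i) (hX i hi)

theorem posSemidef_signalCovariance [Finite m] [PartialOrder R] [StarOrderedRing R]
    (hX : ∀ i ∈ S, (X i).PosSemidef) : (signalCovariance S H Ψ X).PosSemidef :=
  (posSemidef_sum S fun i hi => (hX i hi).mul_mul_conjTranspose_same (Ψ i))
    |>.mul_mul_conjTranspose_same H

theorem trace_mul_signalCovariance [Fintype m] (B : Matrix m m R) :
    (B * signalCovariance S H Ψ X).trace =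
      ∑ i ∈ S, ((Ψ i)ᴴ * Hᴴ * B * H * Ψ i * X i).trace := by
  rw [signalCovariance_apply, Matrix.mul_sum, Matrix.sum_mul, Matrix.mul_sum, trace_sum]
  refine Finset.sum_congr rfl fun i _ => ?_
  calc (B * (H * (Ψ i * X i * (Ψ i)ᴴ) * Hᴴ)).trace
      = ((B * H * Ψ i * X i) * ((Ψ i)ᴴ * Hᴴ)).trace := by simp only [Matrix.mul_assoc]
    _ = (((Ψ i)ᴴ * Hᴴ) * (B * H * Ψ i * X i)).trace := trace_mul_comm _ _
    _ = ((Ψ i)ᴴ * Hᴴ * B * H * Ψ i * X i).trace := by simp only [Matrix.mul_assoc]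

end SignalCovariance

section CommonRate

variable {k N Mk : ℕ} {Nk : ℕ → ℕ} {H : Matrix (Fin Mk) (Fin N) ℂ}
  {Ψ : (i : ℕ) → Matrix (Fin N) (Fin (Nk i)) ℂ} {L s : ℝ} {Qc : Matrix (Fin N) (Fin N) ℂ}

/-- The covariance `I + (1/(Lσ²)) H (Σ_{k'≤k} Ψ_{k'} X_{k'} Ψ_{k'}ᴴ) Hᴴ` of noise plus private
streams at user `k`, in units of the noise power `σ² = s`. -/
noncomputable def noiseCovariance (k : ℕ) (H : Matrix (Fin Mk) (Fin N) ℂ)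
    (Ψ : (i : ℕ) → Matrix (Fin N) (Fin (Nk i)) ℂ) (L s : ℝ)
    (X : (i : ℕ) → Matrix (Fin (Nk i)) (Fin (Nk i)) ℂ) : Matrix (Fin Mk) (Fin Mk) ℂ :=
  1 + (1 / (L * s)) • signalCovariance (Finset.Icc 1 k) H Ψ X

variable {X Xb W V : (i : ℕ) → Matrix (Fin (Nk i)) (Fin (Nk i)) ℂ}

theorem isHermitian_noiseCovariance (hX : ∀ i ∈ Finset.Icc 1 k, (X i).IsHermitian) :
    (noiseCovariance k H Ψ L s X).IsHermitian :=
  isHermitian_one.add ((isHermitian_signalCovariance hX).smul (.all _))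

theorem posDef_noiseCovariance (hLs : 0 ≤ L * s) (hX : ∀ i ∈ Finset.Icc 1 k, (X i).PosSemidef) :
    (noiseCovariance k H Ψ L s X).PosDef :=
  PosDef.one.add_posSemidef ((posSemidef_signalCovariance hX).smul (one_div_nonneg.2 hLs))

theorem noiseCovariance_add :
    noiseCovariance k H Ψ L s (Xb + W) =
      noiseCovariance k H Ψ L s Xb + (1 / (L * s)) • signalCovariance (Finset.Icc 1 k) H Ψ W := by
  simp only [noiseCovariance, map_add, smul_add, add_assoc]

theorem commonRate_eq_logb_sub_logb (hs : s ≠ 0) (hQc : Qc.IsHermitian)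
    (hX : ∀ i ∈ Finset.Icc 1 k, (X i).IsHermitian)
    (hnoise : (noiseCovariance k H Ψ L s X).det ≠ 0)
    (htotal : ((1 / (L * s)) • (H * Qc * Hᴴ) + noiseCovariance k H Ψ L s X).det ≠ 0) :
    commonRate k N Mk Nk H Ψ L s Qc X =
      Real.logb 2 ((1 / (L * s)) • (H * Qc * Hᴴ) + noiseCovariance k H Ψ L s X).det.re
        - Real.logb 2 (noiseCovariance k H Ψ L s X).det.re := by
  have one_div_eq : 1 / L = s * (1 / (L * s)) := by field_simp
  have noise_eq : s • (1 : Matrix (Fin Mk) (Fin Mk) ℂ) +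
      (1 / L) • (H * (∑ i ∈ Finset.Icc 1 k, Ψ i * X i * (Ψ i)ᴴ) * Hᴴ) =
      s • noiseCovariance k H Ψ L s X := by
    rw [noiseCovariance, signalCovariance_apply, smul_add, smul_smul, one_div_eq]
  have common_eq : (1 / L) • (H * Qc * Hᴴ) = s • (1 / (L * s)) • (H * Qc * Hᴴ) := by
    rw [smul_smul, one_div_eq]
  have hQ : ((1 / (L * s)) • (H * Qc * Hᴴ)).IsHermitian :=
    (isHermitian_mul_mul_conjTranspose H hQc).smul (.all _)
  rw [commonRate, noise_eq, common_eq, smul_mul_inv_smul_s3 hs hnoise,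
    logb_re_det_one_add_mul_inv_s3 2 hQ (isHermitian_noiseCovariance hX) hnoise htotal]

theorem commonRateApprox_add :
    commonRateApprox k N Mk Nk H Ψ L s Qc Xb (Xb + W) =
      Real.logb 2 ((1 / (L * s)) • (H * Qc * Hᴴ) + noiseCovariance k H Ψ L s (Xb + W)).det.re
        - Real.logb 2 (noiseCovariance k H Ψ L s Xb).det.re
        - ((noiseCovariance k H Ψ L s Xb)⁻¹ *
            ((1 / (L * s)) • signalCovariance (Finset.Icc 1 k) H Ψ W)).trace.re / Real.log 2 := by
  have total_eq : 1 + (1 / (L * s)) • (H * Qc * Hᴴ) + (1 / (L * s)) •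
      (H * (∑ i ∈ Finset.Icc 1 k, Ψ i * (Xb + W) i * (Ψ i)ᴴ) * Hᴴ) =
      (1 / (L * s)) • (H * Qc * Hᴴ) + noiseCovariance k H Ψ L s (Xb + W) := by
    rw [noiseCovariance, signalCovariance_apply, add_left_comm, add_assoc]
  rw [commonRateApprox, total_eq, Matrix.mul_smul, trace_smul, trace_mul_signalCovariance,
    Complex.smul_re, Complex.re_sum, smul_eq_mul]
  simp only [Pi.add_apply, add_sub_cancel_left, noiseCovariance, signalCovariance_apply]
  ring

theorem commonRate_sub_commonRateApprox (hs : s ≠ 0) (hQc : Qc.IsHermitian)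
    (hXb : ∀ i ∈ Finset.Icc 1 k, (Xb i).IsHermitian) (hW : ∀ i ∈ Finset.Icc 1 k, (W i).IsHermitian)
    (hnoise : (noiseCovariance k H Ψ L s (Xb + W)).det ≠ 0)
    (htotal : ((1 / (L * s)) • (H * Qc * Hᴴ) + noiseCovariance k H Ψ L s (Xb + W)).det ≠ 0) :
    commonRate k N Mk Nk H Ψ L s Qc (Xb + W) - commonRateApprox k N Mk Nk H Ψ L s Qc Xb (Xb + W) =
      -(Real.log 2)⁻¹ * (Real.log ‖(noiseCovariance k H Ψ L s (Xb + W)).det‖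
        - Real.log ‖(noiseCovariance k H Ψ L s Xb).det‖
        - ((noiseCovariance k H Ψ L s Xb)⁻¹ *
            ((1 / (L * s)) • signalCovariance (Finset.Icc 1 k) H Ψ W)).trace.re) := by
  have hXW : ∀ i ∈ Finset.Icc 1 k, ((Xb + W) i).IsHermitian := fun i hi =>
    (hXb i hi).add (hW i hi)
  rw [commonRate_eq_logb_sub_logb hs hQc hXW hnoise htotal, commonRateApprox_add,
    ← log_re_det_of_isHermitian (isHermitian_noiseCovariance hXW),
    ← log_re_det_of_isHermitian (isHermitian_noiseCovariance hXb)]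
  simp only [Real.logb]
  ring

theorem commonRate_first_order_general (hL : 0 < L) (hs : 0 < s) (hQc : Qc.PosSemidef)
    (hXb : ∀ i ∈ Finset.Icc 1 k, (Xb i).PosSemidef)
    (hV : ∀ i ∈ Finset.Icc 1 k, (V i).IsHermitian) :
    (fun h : ℝ => commonRate k N Mk Nk H Ψ L s Qc (Xb + h • V)
        - commonRateApprox k N Mk Nk H Ψ L s Qc Xb (Xb + h • V))
      =O[𝓝 0] fun h => h ^ 2 := by
  set M := noiseCovariance k H Ψ L s Xb
  set Q := (1 / (L * s)) • (H * Qc * Hᴴ)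
  set D := (1 / (L * s)) • signalCovariance (Finset.Icc 1 k) H Ψ V
  have hLs : 0 < L * s := mul_pos hL hs
  have hM : M.PosDef := posDef_noiseCovariance hLs.le hXb
  have hQM : (Q + M).PosDef := hM.posSemidef_add <|
    (hQc.mul_mul_conjTranspose_same H).smul (one_div_nonneg.2 hLs.le)
  have smul_D (h : ℝ) :
      (1 / (L * s)) • signalCovariance (Finset.Icc 1 k) H Ψ (h • V) = h • D := by
    rw [LinearMap.map_smul_of_tower, smul_comm]
  have noise_add (h : ℝ) : noiseCovariance k H Ψ L s (Xb + h • V) = M + h • D := by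
    rw [noiseCovariance_add, smul_D]
  have log_det_remainder : (fun h : ℝ => Real.log ‖(M + h • D).det‖ - Real.log ‖M.det‖
      - (M⁻¹ * (h • D)).trace.re) =O[𝓝 0] fun h => h ^ 2 := by
    have ofReal_tendsto : Tendsto Complex.ofReal (𝓝 0) (𝓝 0) :=
      Complex.continuous_ofReal.tendsto' 0 0 Complex.ofReal_zero
    simpa only [Function.comp_def, Complex.coe_smul, ← Complex.ofReal_pow,
      Complex.isBigO_ofReal_right] using
        (isBigO_log_norm_det_add_smul hM.det_pos.ne' D).comp_tendsto ofReal_tendsto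
  refine (log_det_remainder.const_mul_left (-(Real.log 2)⁻¹)).congr' ?_ .rfl
  filter_upwards [eventually_det_add_smul_ne_zero hM.det_pos.ne' D,
    eventually_det_add_smul_ne_zero hQM.det_pos.ne' D] with h hnoise htotal
  rw [add_assoc] at htotal
  rw [← noise_add] at hnoise htotal
  rw [commonRate_sub_commonRateApprox hs.ne' hQc.isHermitian (fun i hi => (hXb i hi).isHermitian)
    (W := h • V) (fun i hi => (hV i hi).smul (.all h)) hnoise htotal, noise_add, smul_D]

end CommonRate

/-- Proposition 2, common-message part: along Hermitian directions `V` that keep the matrices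
positive semi-definite, `R̃_{k,c}` approximates `R_{k,c}` to first order, with quadratic
error in `h`. -/
theorem commonRate_first_order (K k N Mk : ℕ) (hK : 1 ≤ K) (hk1 : 1 ≤ k) (hkK : k ≤ K)
    (hN : 0 < N) (hMk : 0 < Mk)
    (Nk : ℕ → ℕ) (hNk : ∀ i ∈ Finset.Icc 1 k, 0 < Nk i)
    (H : Matrix (Fin Mk) (Fin N) ℂ)
    (Ψ : (i : ℕ) → Matrix (Fin N) (Fin (Nk i)) ℂ)
    (L s : ℝ) (hL : 0 < L) (hs : 0 < s)
    (Qc : Matrix (Fin N) (Fin N) ℂ) (hQc : Qc.PosSemidef)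
    (Xb V : (i : ℕ) → Matrix (Fin (Nk i)) (Fin (Nk i)) ℂ)
    (hXb : ∀ i ∈ Finset.Icc 1 k, (Xb i).PosSemidef)
    (hV : ∀ i ∈ Finset.Icc 1 k, (V i).IsHermitian) :
    ∃ c > (0 : ℝ), ∃ δ > (0 : ℝ), ∀ h : ℝ, 0 < h → h < δ →
      (∀ i ∈ Finset.Icc 1 k, (Xb i + h • V i).PosSemidef) →
      |commonRate k N Mk Nk H Ψ L s Qc (fun i => Xb i + h • V i)
          - commonRateApprox k N Mk Nk H Ψ L s Qc Xb (fun i => Xb i + h • V i)|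
        ≤ c * h ^ 2 := by
  obtain ⟨c, hc, δ, hδ, hbound⟩ := exists_pos_forall_norm_le_of_isBigO
    (commonRate_first_order_general (H := H) (Ψ := Ψ) hL hs hQc hXb hV)
  exact ⟨c, hc, δ, hδ, fun h h_pos h_lt _ =>
    (hbound h (by rwa [Real.norm_of_nonneg h_pos.le])).trans_eq
      (by rw [Real.norm_of_nonneg (sq_nonneg h)])⟩
end

section
/- Let K ≥ 1 and k ∈ {2,…,K}; fix positive integers N and M_1,…,M_{k−1} with Σ_{j<k} M_j < N. Let H_j ∈ ℂ^{M_j×N} and H̄_j ∈ ℂ^{M_j×N} for j = 1,…,k, set ΔH_j = H̄_j − H_j, and let L_k > 0. For k' = 2,…,k−1 define the stacked matrices F_{k'} = [H_1; …; H_{k'−1}] and F̄_{k'} = [H̄_1; …; H̄_{k'−1}] (of size (Σ_{j<k'}M_j)×N) and ΔF_{k'} = F̄_{k'} − F_{k'}; assume each F_{k'} and F̄_{k'} has full row rank; set Ψ_1 = Ψ̄_1 = I_N. Then for each k' ∈ {2,…,k−1} there exist matrices Ψ_{k'}, Ψ̄_{k'} ∈ ℂ^{N×N_{k'}} (N_{k'}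 = N − Σ_{j<k'}M_j) with orthonormal columns satisfying F_{k'}Ψ_{k'} = 0 and F̄_{k'}Ψ̄_{k'} = 0, such that, setting C_{k'} = Ψ_{k'}^H (ΔF_{k'})^H (F̄_{k'}F̄_{k'}^H)^{-1} ΔF_{k'} Ψ_{k'} (and C_1 = 0), whenever ‖C_{k'}‖ < 1 for all k' ∈ {1,…,k−1}, the following holds for all vectors w_{k'} ∈ ℂ^{N_{k'}}: ‖ (1/√L_k) H_k Σ_{k'=1}^{k−1} (Ψ̄_{k'} − Ψ_{k'}) w_{k'} ‖₂ ≤ (1/√L_k) ‖H_k‖ Σ_{k'=1}^{k−1} [ ‖F̄_{k'}^+‖ ‖ΔF_{k'}‖ − ln(1 − ‖C_{k'}‖) ] ‖w_{k'}‖₂. -/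
open Matrix
open scoped ComplexOrder

/-- The spectral norm (ℓ²-induced operator norm) of a complex matrix. -/
noncomputable def specNorm {m n : Type*} [Fintype m] [Fintype n] [DecidableEq n]
    (A : Matrix m n ℂ) : ℝ :=
  ‖LinearMap.toContinuousLinearMap (Matrix.toEuclideanLin A)‖

/-- The Euclidean norm of a complex vector. -/
noncomputable def vecNorm {n : Type*} [Fintype n] (v : n → ℂ) : ℝ :=
  Real.sqrt (∑ i, ‖v i‖ ^ 2)

/-- The stacked (augmented) channel matrix `F_i = [H_1; …; H_{i−1}]` of the first `i−1`
users, with rows indexed by the sigma type `(j : Fin (i−1)) × Fin (M (j+1))`. -/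
def stackMat (N : ℕ) (M : ℕ → ℕ) (H : (j : ℕ) → Matrix (Fin (M j)) (Fin N) ℂ) (i : ℕ) :
    Matrix ((j : Fin (i - 1)) × Fin (M (j.val + 1))) (Fin N) ℂ :=
  Matrix.of fun p c => H (p.1.val + 1) p.2 c

/-! Projecting `Ψ` onto `ker F̄` gives `T = (1 - P) Ψ`, where `P` is the orthogonal projection onto
the row space of `F̄`, and `Tᴴ T = 1 - C`. If `‖C‖ < 1`, the polar decomposition `T = Ψ̄ S` with
`S = √(1 - C)` yields `Ψ̄` with orthonormal columns in `ker F̄`, and `Ψ̄ - Ψ = Ψ̄ (1 - S) - P Ψ`.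
Here `P Ψ = F̄⁺ ΔF Ψ` because `F Ψ = 0`, while `‖1 - S‖ ≤ ‖1 - S²‖ = ‖C‖ ≤ -ln (1 - ‖C‖)`. -/

section RowProjection

variable {R m n p : Type*} [CommRing R] [StarRing R] [Fintype m] [DecidableEq m] [Fintype n]

/-- The Moore–Penrose pseudo-inverse `B⁺ = Bᴴ (B Bᴴ)⁻¹` of a matrix of full row rank. When `B Bᴴ`
is singular the matrix inverse is `0`, and so is this expression. -/
noncomputable def rowPinv (B : Matrix m n R) : Matrix n m R := Bᴴ * (B * Bᴴ)⁻¹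

/-- The orthogonal projection `B⁺ B` onto the row space of a matrix `B` of full row rank. -/
noncomputable def rowProj (B : Matrix m n R) : Matrix n n R := rowPinv B * B

/-- The matrix `C = Ψᴴ ΔFᴴ (F̄ F̄ᴴ)⁻¹ ΔF Ψ` with `ΔF = F̄ - F`. When `F Ψ = 0` it is the Gram matrix
of the components of the columns of `Ψ` in the row space of `F̄`. -/
noncomputable def leakageGram (F Fb : Matrix m n R) (Ψ : Matrix n p R) : Matrix p p R :=
  Ψᴴ * (Fb - F)ᴴ * (Fb * Fbᴴ)⁻¹ * (Fb - F) * Ψ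

lemma leakageGram_self (F : Matrix m n R) (Ψ : Matrix n p R) : leakageGram F F Ψ = 0 := by
  rw [leakageGram, sub_self, Matrix.mul_zero, Matrix.zero_mul]

lemma mul_rowProj {B : Matrix m n R} (hB : IsUnit (B * Bᴴ)) : B * rowProj B = B := by
  rw [rowProj, rowPinv, ← Matrix.mul_assoc, ← Matrix.mul_assoc,
    mul_nonsing_inv _ ((isUnit_iff_isUnit_det _).1 hB), Matrix.one_mul]

lemma isStarProjection_rowProj {B : Matrix m n R} (hB : IsUnit (B * Bᴴ)) :
    IsStarProjection (rowProj B) where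
  isIdempotentElem := by
    rw [IsIdempotentElem]
    nth_rw 1 [rowProj]
    rw [Matrix.mul_assoc, mul_rowProj hB, rowProj]
  isSelfAdjoint := by
    simp only [IsSelfAdjoint, star_eq_conjTranspose, rowProj, rowPinv, conjTranspose_mul,
      conjTranspose_nonsing_inv, conjTranspose_conjTranspose, Matrix.mul_assoc]

lemma rowProj_mul_of_mul_eq_zero {F Fb : Matrix m n R} {Ψ : Matrix n p R} (hF : F * Ψ = 0) :
    rowProj Fb * Ψ = rowPinv Fb * (Fb - F) * Ψ := by
  rw [rowProj, Matrix.mul_assoc, Matrix.mul_assoc, Matrix.sub_mul, hF, sub_zero]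

lemma leakageGram_of_mul_eq_zero {F Fb : Matrix m n R} {Ψ : Matrix n p R} (hF : F * Ψ = 0) :
    leakageGram F Fb Ψ = Ψᴴ * rowProj Fb * Ψ := by
  have hΔ : (Fb - F) * Ψ = Fb * Ψ := by rw [Matrix.sub_mul, hF, sub_zero]
  rw [leakageGram, ← conjTranspose_mul, Matrix.mul_assoc _ (Fb - F), hΔ, rowProj, rowPinv,
    conjTranspose_mul]
  simp only [Matrix.mul_assoc]

lemma conjTranspose_mul_self_of_isStarProjection {Q : Matrix n n R} (hQ : IsStarProjection Q)
    (Ψ : Matrix n p R) : (Q * Ψ)ᴴ * (Q * Ψ) = Ψᴴ * Q * Ψ := by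
  rw [conjTranspose_mul, ← star_eq_conjTranspose Q, hQ.isSelfAdjoint.star_eq, Matrix.mul_assoc,
    ← Matrix.mul_assoc Q, hQ.isIdempotentElem.eq, Matrix.mul_assoc]

lemma gram_one_sub_rowProj_mul [DecidableEq n] [DecidableEq p] {F Fb : Matrix m n R}
    {Ψ : Matrix n p R} (hFb : IsUnit (Fb * Fbᴴ)) (hΨ : Ψᴴ * Ψ = 1) (hF : F * Ψ = 0) :
    ((1 - rowProj Fb) * Ψ)ᴴ * ((1 - rowProj Fb) * Ψ) = 1 - leakageGram F Fb Ψ := by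
  rw [conjTranspose_mul_self_of_isStarProjection (isStarProjection_rowProj hFb).one_sub,
    Matrix.mul_sub, Matrix.sub_mul, Matrix.mul_one, hΨ, leakageGram_of_mul_eq_zero hF]

end RowProjection

section OrthonormalColumns

variable {𝕜 m n p : Type*} [RCLike 𝕜] [Fintype n]

lemma conjTranspose_mul_self_eq_one_of_orthonormal [DecidableEq p]
    {v : p → EuclideanSpace 𝕜 n} (hv : Orthonormal 𝕜 v) :
    (Matrix.of fun r c => v c r)ᴴ * (Matrix.of fun r c => v c r) = (1 : Matrix p p 𝕜) := by
  ext i j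
  rw [Matrix.one_apply, ← orthonormal_iff_ite.1 hv i j, PiLp.inner_apply, Matrix.mul_apply]
  simp [mul_comm]

lemma finrank_ker_toEuclideanLin [Finite m] [DecidableEq n] (F : Matrix m n 𝕜) :
    Module.finrank 𝕜 (LinearMap.ker (toEuclideanLin F)) = Fintype.card n - F.rank := by
  have hrank : F.rank = Module.finrank 𝕜 (LinearMap.range (toEuclideanLin F)) :=
    rank_eq_finrank_range_toLin F (PiLp.basisFun 2 𝕜 m) (PiLp.basisFun 2 𝕜 n)
  have hnullity := LinearMap.finrank_range_add_finrank_ker (toEuclideanLin F)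
  rw [finrank_euclideanSpace] at hnullity
  omega

lemma exists_conjTranspose_mul_self_eq_one_and_mul_eq_zero [Finite m] [Fintype p] [DecidableEq p]
    (F : Matrix m n 𝕜) (hp : Fintype.card p ≤ Fintype.card n - F.rank) :
    ∃ Ψ : Matrix n p 𝕜, Ψᴴ * Ψ = 1 ∧ F * Ψ = 0 := by
  classical
  let b := stdOrthonormalBasis 𝕜 (LinearMap.ker (toEuclideanLin F))
  obtain ⟨e⟩ : Nonempty (p ↪ Fin (Module.finrank 𝕜 (LinearMap.ker (toEuclideanLin F)))) :=
    Function.Embedding.nonempty_of_card_le <| by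
      rwa [Fintype.card_fin, finrank_ker_toEuclideanLin]
  have hv : Orthonormal 𝕜 fun j => (b (e j) : EuclideanSpace 𝕜 n) :=
    (b.orthonormal.comp e e.injective).comp_linearIsometry (Submodule.subtypeₗᵢ _)
  refine ⟨_, conjTranspose_mul_self_eq_one_of_orthonormal hv, ?_⟩
  ext i j
  exact congrArg (fun v : EuclideanSpace 𝕜 m => v i) (LinearMap.mem_ker.1 (b (e j)).2)

lemma isUnit_mul_conjTranspose_of_rank_eq_card [Fintype m] [DecidableEq m] {B : Matrix m n 𝕜}
    (hB : B.rank = Fintype.card m) : IsUnit (B * Bᴴ) := by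
  rw [← linearIndependent_rows_iff_isUnit, linearIndependent_iff_card_eq_finrank_span,
    Set.finrank, ← rank_eq_finrank_span_row, rank_self_mul_conjTranspose, hB]

end OrthonormalColumns

lemma norm_one_sub_le_norm_one_sub_mul_self {A : Type*} [CStarAlgebra A] [PartialOrder A]
    [StarOrderedRing A] {s : A} (hs : 0 ≤ s) : ‖1 - s‖ ≤ ‖1 - s * s‖ := by
  have hsa : IsSelfAdjoint s := .of_nonneg hs
  have hcfc₁ : cfc (fun x : ℝ => 1 - x) s = 1 - s := by
    rw [cfc_sub (fun _ => 1) (fun x => x) s, cfc_const_one ℝ s, cfc_id' ℝ s]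
  have hcfc₂ : cfc (fun x : ℝ => 1 - x * x) s = 1 - s * s := by
    rw [cfc_sub (fun _ => 1) (fun x => x * x) s, cfc_mul (fun x => x) (fun x => x) s,
      cfc_const_one ℝ s, cfc_id' ℝ s]
  rw [← hcfc₁]
  refine norm_cfc_le (norm_nonneg _) fun x hx => ?_
  have hx0 : 0 ≤ x := spectrum_nonneg_of_nonneg hs hx
  calc ‖1 - x‖ ≤ ‖1 - x‖ * ‖1 + x‖ :=
        le_mul_of_one_le_right (norm_nonneg _) (by rw [Real.norm_of_nonneg] <;> linarith)
    _ = ‖1 - x * x‖ := by rw [← norm_mul]; ring_nf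
    _ ≤ ‖1 - s * s‖ := hcfc₂ ▸ norm_apply_le_norm_cfc (fun x : ℝ => 1 - x * x) s hx

section L2OperatorNorm

open scoped Matrix.Norms.L2Operator MatrixOrder

variable {m n p : Type*} [Fintype n] [Fintype p] [DecidableEq p]

lemma l2_opNorm_le_one_of_conjTranspose_mul_self_eq_one {U : Matrix n p ℂ} (hU : Uᴴ * U = 1) :
    ‖U‖ ≤ 1 := by
  cases isEmpty_or_nonempty p
  · rw [Subsingleton.elim U 0, norm_zero]
    exact zero_le_one
  · have hsq : ‖U‖ * ‖U‖ = 1 := by rw [← l2_opNorm_conjTranspose_mul_self, hU, norm_one]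
    exact (le_abs_self _).trans (abs_le_one_iff_mul_self_le_one.2 hsq.le)

lemma exists_polar_decomposition {T : Matrix n p ℂ} (hT : IsUnit (Tᴴ * T)) :
    ∃ (U : Matrix n p ℂ) (S : Matrix p p ℂ),
      Uᴴ * U = 1 ∧ 0 ≤ S ∧ IsUnit S ∧ S * S = Tᴴ * T ∧ U * S = T := by
  have hnonneg : 0 ≤ Tᴴ * T := nonneg_iff_posSemidef.2 (posSemidef_conjTranspose_mul_self T)
  set S := CFC.sqrt (Tᴴ * T)
  have hS : 0 ≤ S := CFC.sqrt_nonneg _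
  have hSS : S * S = Tᴴ * T := CFC.sqrt_mul_sqrt_self _ hnonneg
  have hSunit : IsUnit S := (CFC.isUnit_sqrt_iff _ hnonneg).2 hT
  have hSdet : IsUnit S.det := (isUnit_iff_isUnit_det S).1 hSunit
  have hSH : Sᴴ = S := (nonneg_iff_posSemidef.1 hS).isHermitian
  refine ⟨T * S⁻¹, S, ?_, hS, hSunit, hSS, nonsing_inv_mul_cancel_right _ _ hSdet⟩
  calc (T * S⁻¹)ᴴ * (T * S⁻¹) = S⁻¹ * (Tᴴ * T) * S⁻¹ := by
        simp only [conjTranspose_mul, conjTranspose_nonsing_inv, hSH, Matrix.mul_assoc]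
    _ = 1 := by
        rw [← hSS, nonsing_inv_mul_cancel_left _ _ hSdet, mul_nonsing_inv _ hSdet]

variable [Fintype m] [DecidableEq m] [DecidableEq n]

lemma exists_nullBasis_norm_sub_le {F Fb : Matrix m n ℂ} {Ψ : Matrix n p ℂ}
    (hFb : IsUnit (Fb * Fbᴴ)) (hΨ : Ψᴴ * Ψ = 1) (hF : F * Ψ = 0)
    (hC : ‖leakageGram F Fb Ψ‖ < 1) :
    ∃ Ψb : Matrix n p ℂ, Ψbᴴ * Ψb = 1 ∧ Fb * Ψb = 0 ∧
      ‖Ψb - Ψ‖ ≤ ‖rowPinv Fb‖ * ‖Fb - F‖ + ‖leakageGram F Fb Ψ‖ := by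
  have hgram := gram_one_sub_rowProj_mul hFb hΨ hF
  obtain ⟨Ψb, S, hΨb, hS, hSunit, hSS, hpolar⟩ :=
    exists_polar_decomposition (hgram ▸ isUnit_one_sub_of_norm_lt_one hC)
  have hnull : Fb * Ψb = 0 := by
    have hmulS : Fb * Ψb * S = 0 := by
      rw [Matrix.mul_assoc, hpolar, ← Matrix.mul_assoc, Matrix.mul_sub, mul_rowProj hFb,
        Matrix.mul_one, sub_self, Matrix.zero_mul]
    rw [← mul_nonsing_inv_cancel_right S (Fb * Ψb) ((isUnit_iff_isUnit_det S).1 hSunit), hmulS,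
      Matrix.zero_mul]
  have hdecomp : Ψb - Ψ = Ψb * (1 - S) - rowPinv Fb * (Fb - F) * Ψ := by
    rw [Matrix.mul_sub, hpolar, ← rowProj_mul_of_mul_eq_zero hF, Matrix.sub_mul, Matrix.mul_one,
      Matrix.one_mul]
    abel
  have hpolarPart : ‖Ψb * (1 - S)‖ ≤ ‖leakageGram F Fb Ψ‖ :=
    calc ‖Ψb * (1 - S)‖ ≤ ‖Ψb‖ * ‖1 - S‖ := l2_opNorm_mul _ _
      _ ≤ ‖1 - S‖ := mul_le_of_le_one_left (norm_nonneg _)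
          (l2_opNorm_le_one_of_conjTranspose_mul_self_eq_one hΨb)
      _ ≤ ‖1 - S * S‖ := norm_one_sub_le_norm_one_sub_mul_self hS
      _ = ‖leakageGram F Fb Ψ‖ := by rw [hSS, hgram, sub_sub_cancel]
  have hprojPart : ‖rowPinv Fb * (Fb - F) * Ψ‖ ≤ ‖rowPinv Fb‖ * ‖Fb - F‖ :=
    calc ‖rowPinv Fb * (Fb - F) * Ψ‖ ≤ ‖rowPinv Fb * (Fb - F)‖ * ‖Ψ‖ := l2_opNorm_mul _ _
      _ ≤ ‖rowPinv Fb * (Fb - F)‖ := mul_le_of_le_one_right (norm_nonneg _)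
          (l2_opNorm_le_one_of_conjTranspose_mul_self_eq_one hΨ)
      _ ≤ ‖rowPinv Fb‖ * ‖Fb - F‖ := l2_opNorm_mul _ _
  refine ⟨Ψb, hΨb, hnull, ?_⟩
  rw [hdecomp]
  linarith [norm_sub_le (Ψb * (1 - S)) (rowPinv Fb * (Fb - F) * Ψ)]

end L2OperatorNorm

section SpecNorm

variable {ι m n p : Type*} [Fintype m] [Fintype n]

lemma specNorm_zero [DecidableEq n] : specNorm (0 : Matrix m n ℂ) = 0 := by
  rw [specNorm, map_zero, map_zero, norm_zero]

lemma specNorm_le_zero_iff [DecidableEq n] {A : Matrix m n ℂ} : specNorm A ≤ 0 ↔ A = 0 := by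
  rw [specNorm, norm_le_zero_iff, map_eq_zero_iff _ (LinearEquiv.injective _),
    map_eq_zero_iff _ (LinearEquiv.injective _)]

lemma vecNorm_eq_norm_toLp (v : n → ℂ) :
    vecNorm v = ‖(WithLp.toLp 2 v : EuclideanSpace ℂ n)‖ :=
  (EuclideanSpace.norm_eq _).symm

lemma vecNorm_sum_le (s : Finset ι) (f : ι → n → ℂ) :
    vecNorm (∑ i ∈ s, f i) ≤ ∑ i ∈ s, vecNorm (f i) := by
  simp only [vecNorm_eq_norm_toLp, WithLp.toLp_sum]
  exact norm_sum_le _ _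

lemma vecNorm_smul {c : ℝ} (hc : 0 ≤ c) (v : n → ℂ) : vecNorm (c • v) = c * vecNorm v := by
  simp only [vecNorm_eq_norm_toLp, WithLp.toLp_smul, norm_smul, Real.norm_of_nonneg hc]

lemma vecNorm_mulVec_le [DecidableEq n] (A : Matrix m n ℂ) (v : n → ℂ) :
    vecNorm (A *ᵥ v) ≤ specNorm A * vecNorm v := by
  simp only [vecNorm_eq_norm_toLp]
  exact l2_opNorm_mulVec A (WithLp.toLp 2 v)

lemma vecNorm_smul_mulVec_sum_le [DecidableEq n] {q : ι → Type*} [∀ i, Fintype (q i)]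
    [∀ i, DecidableEq (q i)] {c : ℝ} (hc : 0 ≤ c) (A : Matrix m n ℂ) (s : Finset ι)
    {D : ∀ i, Matrix n (q i) ℂ} {β : ι → ℝ} (hD : ∀ i ∈ s, specNorm (D i) ≤ β i)
    (w : ∀ i, q i → ℂ) :
    vecNorm (c • A *ᵥ ∑ i ∈ s, D i *ᵥ w i) ≤ c * specNorm A * ∑ i ∈ s, β i * vecNorm (w i) := by
  have hsum : vecNorm (∑ i ∈ s, D i *ᵥ w i) ≤ ∑ i ∈ s, β i * vecNorm (w i) :=
    (vecNorm_sum_le s _).trans <| Finset.sum_le_sum fun i hi =>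
      (vecNorm_mulVec_le (D i) (w i)).trans <|
        mul_le_mul_of_nonneg_right (hD i hi) (Real.sqrt_nonneg _)
  calc vecNorm (c • A *ᵥ ∑ i ∈ s, D i *ᵥ w i)
      = c * vecNorm (A *ᵥ ∑ i ∈ s, D i *ᵥ w i) := vecNorm_smul hc _
    _ ≤ c * (specNorm A * ∑ i ∈ s, β i * vecNorm (w i)) :=
        mul_le_mul_of_nonneg_left ((vecNorm_mulVec_le A _).trans <|
          mul_le_mul_of_nonneg_left hsum (norm_nonneg _)) hc
    _ = c * specNorm A * ∑ i ∈ s, β i * vecNorm (w i) := (mul_assoc _ _ _).symm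

lemma exists_nullBasis_specNorm_sub_le [DecidableEq m] [DecidableEq n] [Fintype p] [DecidableEq p]
    {F Fb : Matrix m n ℂ} {Ψ : Matrix n p ℂ} (hFb : Fb.rank = Fintype.card m)
    (hp : Fintype.card p ≤ Fintype.card n - Fintype.card m) (hΨ : Ψᴴ * Ψ = 1) (hF : F * Ψ = 0) :
    ∃ Ψb : Matrix n p ℂ, Ψbᴴ * Ψb = 1 ∧ Fb * Ψb = 0 ∧
      (specNorm (leakageGram F Fb Ψ) < 1 →
        specNorm (Ψb - Ψ) ≤ specNorm (rowPinv Fb) * specNorm (Fb - F)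
          - Real.log (1 - specNorm (leakageGram F Fb Ψ))) := by
  by_cases hC : specNorm (leakageGram F Fb Ψ) < 1
  · obtain ⟨Ψb, hΨb, hnull, hle⟩ := exists_nullBasis_norm_sub_le
      (isUnit_mul_conjTranspose_of_rank_eq_card hFb) hΨ hF hC
    have hlog : specNorm (leakageGram F Fb Ψ) ≤ -Real.log (1 - specNorm (leakageGram F Fb Ψ)) := by
      linarith [Real.log_le_sub_one_of_pos (sub_pos.2 hC)]
    exact ⟨Ψb, hΨb, hnull, fun _ => hle.trans (add_le_add le_rfl hlog)⟩
  · obtain ⟨Ψb, hΨb, hnull⟩ :=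
      exists_conjTranspose_mul_self_eq_one_and_mul_eq_zero Fb (hFb.symm ▸ hp)
    exact ⟨Ψb, hΨb, hnull, fun h => absurd h hC⟩

end SpecNorm

section StackMat

variable (N : ℕ) (M : ℕ → ℕ) (H : (j : ℕ) → Matrix (Fin (M j)) (Fin N) ℂ)

lemma card_stackMat_rows (i : ℕ) :
    Fintype.card ((j : Fin (i - 1)) × Fin (M (j.val + 1))) = ∑ j ∈ Finset.Icc 1 (i - 1), M j := by
  simp only [Fintype.card_sigma, Fintype.card_fin]
  rw [Fin.sum_univ_eq_sum_range (fun j => M (j + 1)), Finset.range_eq_Ico,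
    Finset.sum_Ico_add' M 0 (i - 1) 1]
  rfl

lemma exists_orthonormal_stackMat_mul_eq_zero :
    ∃ Ψ : (i : ℕ) → Matrix (Fin N) (Fin (N - ∑ j ∈ Finset.Icc 1 (i - 1), M j)) ℂ,
      Ψ 1 = (1 : Matrix (Fin N) (Fin N) ℂ) ∧
      ∀ i, (Ψ i)ᴴ * Ψ i = 1 ∧ stackMat N M H i * Ψ i = 0 := by
  have hex (i : ℕ) : ∃ Ψ : Matrix (Fin N) (Fin (N - ∑ j ∈ Finset.Icc 1 (i - 1), M j)) ℂ,
      Ψᴴ * Ψ = 1 ∧ stackMat N M H i * Ψ = 0 := by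
    refine exists_conjTranspose_mul_self_eq_one_and_mul_eq_zero _ ?_
    rw [Fintype.card_fin, Fintype.card_fin, ← card_stackMat_rows]
    exact Nat.sub_le_sub_left (rank_le_card_height _) N
  choose Φ hΦ using hex
  have hone : (1 : Matrix (Fin N) (Fin N) ℂ)ᴴ * 1 = 1 := by
    rw [conjTranspose_one, Matrix.one_mul]
  exact ⟨Function.update Φ 1 (1 : Matrix (Fin N) (Fin N) ℂ), Function.update_self ..,
    (Function.forall_update_iff Φ fun i Ψ => Ψᴴ * Ψ = 1 ∧ stackMat N M H i * Ψ = 0).2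
      ⟨⟨hone, Matrix.ext fun row => row.1.elim0⟩, fun i _ => hΦ i⟩⟩

end StackMat

theorem interference_down_bound_general (k N : ℕ) (hk : 2 ≤ k) (M : ℕ → ℕ)
    (H Hb : (j : ℕ) → Matrix (Fin (M j)) (Fin N) ℂ) (c : ℝ) (hc : 0 ≤ c)
    (hFbrank : ∀ i ∈ Finset.Icc 2 (k - 1),
      (stackMat N M Hb i).rank = Fintype.card ((j : Fin (i - 1)) × Fin (M (j.val + 1))))
    (Ψ : (i : ℕ) → Matrix (Fin N) (Fin (N - ∑ j ∈ Finset.Icc 1 (i - 1), M j)) ℂ)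
    (hΨ : ∀ i ∈ Finset.Icc 1 (k - 1), (Ψ i)ᴴ * Ψ i = 1 ∧ stackMat N M H i * Ψ i = 0) :
    ∃ Ψb : (i : ℕ) → Matrix (Fin N) (Fin (N - ∑ j ∈ Finset.Icc 1 (i - 1), M j)) ℂ,
      Ψb 1 = Ψ 1 ∧
      (∀ i ∈ Finset.Icc 1 (k - 1), (Ψb i)ᴴ * Ψb i = 1 ∧ stackMat N M Hb i * Ψb i = 0) ∧
      ((∀ i ∈ Finset.Icc 1 (k - 1),
          specNorm (leakageGram (stackMat N M H i) (stackMat N M Hb i) (Ψ i)) < 1) →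
        ∀ w : (i : ℕ) → Fin (N - ∑ j ∈ Finset.Icc 1 (i - 1), M j) → ℂ,
          vecNorm (c • H k *ᵥ ∑ i ∈ Finset.Icc 1 (k - 1), (Ψb i - Ψ i) *ᵥ w i)
            ≤ c * specNorm (H k) * ∑ i ∈ Finset.Icc 1 (k - 1),
                (specNorm (rowPinv (stackMat N M Hb i)) *
                    specNorm (stackMat N M Hb i - stackMat N M H i)
                  - Real.log (1 - specNorm
                      (leakageGram (stackMat N M H i) (stackMat N M Hb i) (Ψ i)))) *
                vecNorm (w i)) := by
  have hrank : ∀ i ∈ Finset.Icc 1 (k - 1), (stackMat N M Hb i).rank =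
      Fintype.card ((j : Fin (i - 1)) × Fin (M (j.val + 1))) := fun i hi => by
    obtain rfl | hi1 := eq_or_ne i 1
    · exact (rank_le_card_height _).antisymm (by simp)
    · exact hFbrank i (by grind)
  choose! Ψb hΨb hnull hle using fun i hi => exists_nullBasis_specNorm_sub_le (hrank i hi)
    (by simp only [Fintype.card_fin, card_stackMat_rows, le_refl]) (hΨ i hi).1 (hΨ i hi).2
  have hF1 : stackMat N M Hb 1 = stackMat N M H 1 := Matrix.ext fun row => row.1.elim0
  have hΨb1 : Ψb 1 = Ψ 1 := by
    have hle1 := hle 1 (by grind)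
    rw [hF1, leakageGram_self, sub_self, specNorm_zero, specNorm_zero, mul_zero, sub_zero,
      Real.log_one, sub_zero] at hle1
    exact sub_eq_zero.1 (specNorm_le_zero_iff.1 (hle1 one_pos))
  exact ⟨Ψb, hΨb1, fun i hi => ⟨hΨb i hi, hnull i hi⟩, fun hC =>
    vecNorm_smul_mulVec_sum_le hc (H k) _ fun i hi => hle i hi (hC i hi)⟩

/-- Bound (32) of Proposition 3: the additional inter-user interference `Ξ↓_k` caused to
user `k` by users `1,…,k−1` under SNS precoding with imperfect CSI. There exist orthonormal
null-space bases `Ψ_{k'}` of `F_{k'}` and `Ψ̄_{k'}` of `F̄_{k'}` (with `Ψ_1 = Ψ̄_1 = I_N`)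
such that, whenever `‖C_{k'}‖ < 1` for all `k'`,
`‖(1/√L_k) H_k Σ_{k'<k} (Ψ̄_{k'} − Ψ_{k'}) w_{k'}‖₂
  ≤ (1/√L_k) ‖H_k‖ Σ_{k'<k} [‖F̄_{k'}⁺‖ ‖ΔF_{k'}‖ − ln(1 − ‖C_{k'}‖)] ‖w_{k'}‖₂`. -/
theorem interference_down_bound (K k N : ℕ) (hk : 2 ≤ k) (hkK : k ≤ K)
    (M : ℕ → ℕ) (hM : ∀ j ∈ Finset.Icc 1 (k - 1), 0 < M j)
    (hsum : ∑ j ∈ Finset.Icc 1 (k - 1), M j < N)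
    (H Hb : (j : ℕ) → Matrix (Fin (M j)) (Fin N) ℂ)
    (Lk : ℝ) (hLk : 0 < Lk)
    (hFrank : ∀ i ∈ Finset.Icc 2 (k - 1),
      (stackMat N M H i).rank = Fintype.card ((j : Fin (i - 1)) × Fin (M (j.val + 1))))
    (hFbrank : ∀ i ∈ Finset.Icc 2 (k - 1),
      (stackMat N M Hb i).rank = Fintype.card ((j : Fin (i - 1)) × Fin (M (j.val + 1)))) :
    ∃ Ψ Ψb : (i : ℕ) → Matrix (Fin N) (Fin (N - ∑ j ∈ Finset.Icc 1 (i - 1), M j)) ℂ,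
      Ψ 1 = (1 : Matrix (Fin N) (Fin N) ℂ) ∧
      Ψb 1 = (1 : Matrix (Fin N) (Fin N) ℂ) ∧
      (∀ i ∈ Finset.Icc 2 (k - 1),
        (Ψ i)ᴴ * Ψ i = 1 ∧ (Ψb i)ᴴ * Ψb i = 1 ∧
        stackMat N M H i * Ψ i = 0 ∧ stackMat N M Hb i * Ψb i = 0) ∧
      ((∀ i ∈ Finset.Icc 1 (k - 1),
          specNorm ((Ψ i)ᴴ * (stackMat N M Hb i - stackMat N M H i)ᴴ *
              (stackMat N M Hb i * (stackMat N M Hb i)ᴴ)⁻¹ *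
              (stackMat N M Hb i - stackMat N M H i) * Ψ i) < 1) →
        ∀ w : (i : ℕ) → Fin (N - ∑ j ∈ Finset.Icc 1 (i - 1), M j) → ℂ,
          vecNorm ((1 / Real.sqrt Lk) •
              (H k).mulVec (∑ i ∈ Finset.Icc 1 (k - 1), (Ψb i - Ψ i).mulVec (w i)))
            ≤ (1 / Real.sqrt Lk) * specNorm (H k) *
                ∑ i ∈ Finset.Icc 1 (k - 1),
                  (specNorm ((stackMat N M Hb i)ᴴ *
                        (stackMat N M Hb i * (stackMat N M Hb i)ᴴ)⁻¹) *
                      specNorm (stackMat N M Hb i - stackMat N M H i)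
                    - Real.log (1 -
                        specNorm ((Ψ i)ᴴ * (stackMat N M Hb i - stackMat N M H i)ᴴ *
                          (stackMat N M Hb i * (stackMat N M Hb i)ᴴ)⁻¹ *
                          (stackMat N M Hb i - stackMat N M H i) * Ψ i))) *
                    vecNorm (w i)) := by
  obtain ⟨Ψ, hΨ1, hΨ⟩ := exists_orthonormal_stackMat_mul_eq_zero N M H
  obtain ⟨Ψb, hΨb1, hΨb, hbound⟩ := interference_down_bound_general k N hk M H Hb
    (1 / Real.sqrt Lk) (by positivity) hFbrank Ψ fun i _ => hΨ i
  refine ⟨Ψ, Ψb, hΨ1, hΨb1.trans hΨ1, fun i hi => ?_, hbound⟩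
  have hi1 := Finset.Icc_subset_Icc_left one_le_two hi
  exact ⟨(hΨ i).1, (hΨb i hi1).1, (hΨ i).2, (hΨb i hi1).2⟩
end

section
/- Let m < n be positive integers, let A, Ā ∈ ℂ^{m×n} with Ā of full row rank, and set ΔA = Ā − A. Let Ψ, Ψ̄ ∈ ℂ^{n×(n−m)} be matrices with orthonormal columns satisfying AΨ = 0 and ĀΨ̄ = 0, and set ΔΨ = Ψ̄ − Ψ. Then ΔΨ = − Ā^H(ĀĀ^H)^{-1} ΔA Ψ − Ψ̄ (ΔΨ)^H Ψ. -/
open Matrix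
open scoped ComplexOrder

/-!
The rows of `Ā` together with those of `Ψ̄ᴴ` form a square matrix, and `[Ā⁺ Ψ̄]`, where
`Ā⁺ = Āᴴ(Ā Āᴴ)⁻¹`, is a right inverse of it. A one-sided inverse of a square matrix is
two-sided, which gives the resolution of the identity `Ā⁺ Ā + Ψ̄ Ψ̄ᴴ = 1`. Applied to `Ψ`, and using
`Ā Ψ = ΔA Ψ` and `Ψᴴ Ψ = 1`, it is the perturbation identity.
-/

section ResolutionOfIdentity

variable {m n k R : Type*} [Fintype m] [Fintype n] [Fintype k] [DecidableEq m] [DecidableEq k]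

theorem mul_add_mul_eq_one_of_biorthogonal [DecidableEq n] [Semiring R] [IsStablyFiniteRing R]
    (hcard : Fintype.card m + Fintype.card k = Fintype.card n)
    {A : Matrix m n R} {B : Matrix n m R} {C : Matrix k n R} {D : Matrix n k R}
    (hAB : A * B = 1) (hAD : A * D = 0) (hCB : C * B = 0) (hCD : C * D = 1) :
    B * A + D * C = 1 := by
  have right_inverse : fromRows A C * fromCols B D = 1 := by
    rw [fromRows_mul_fromCols, hAB, hAD, hCB, hCD, fromBlocks_one]
  have card_sum : Fintype.card (m ⊕ k) = Fintype.card n := by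
    rw [Fintype.card_sum, hcard]
  rw [← fromCols_mul_fromRows]
  exact (mul_eq_one_comm_of_card_eq _ _ _ card_sum).mp right_inverse

variable [CommRing R] [StarRing R]

theorem conjTranspose_mul_inv_mul_add_mul_conjTranspose_eq_one [DecidableEq n]
    (hcard : Fintype.card m + Fintype.card k = Fintype.card n)
    {A : Matrix m n R} {Ψ : Matrix n k R} (hA : IsUnit (A * Aᴴ))
    (horth : Ψᴴ * Ψ = 1) (hnull : A * Ψ = 0) :
    Aᴴ * (A * Aᴴ)⁻¹ * A + Ψ * Ψᴴ = 1 := by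
  have mul_pinv : A * (Aᴴ * (A * Aᴴ)⁻¹) = 1 := by
    rw [← Matrix.mul_assoc, mul_nonsing_inv _ ((isUnit_iff_isUnit_det _).mp hA)]
  have conjTranspose_mul_pinv : Ψᴴ * (Aᴴ * (A * Aᴴ)⁻¹) = 0 := by
    rw [← Matrix.mul_assoc, ← conjTranspose_mul, hnull, conjTranspose_zero, Matrix.zero_mul]
  exact mul_add_mul_eq_one_of_biorthogonal hcard mul_pinv hnull conjTranspose_mul_pinv horth

theorem nullBasis_perturbation_identity_general
    (hcard : Fintype.card m + Fintype.card k = Fintype.card n)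
    {A Ab : Matrix m n R} (hAb : IsUnit (Ab * Abᴴ)) {Ψ Ψb : Matrix n k R}
    (horth : Ψᴴ * Ψ = 1) (horthb : Ψbᴴ * Ψb = 1)
    (hnull : A * Ψ = 0) (hnullb : Ab * Ψb = 0) :
    Ψb - Ψ = -(Abᴴ * (Ab * Abᴴ)⁻¹ * (Ab - A) * Ψ) - Ψb * (Ψb - Ψ)ᴴ * Ψ := by
  classical
  have resolution : Abᴴ * (Ab * Abᴴ)⁻¹ * Ab * Ψ + Ψb * Ψbᴴ * Ψ = Ψ := by
    rw [← Matrix.add_mul,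
      conjTranspose_mul_inv_mul_add_mul_conjTranspose_eq_one hcard hAb horthb hnullb,
      Matrix.one_mul]
  have range_part :
      Abᴴ * (Ab * Abᴴ)⁻¹ * (Ab - A) * Ψ = Abᴴ * (Ab * Abᴴ)⁻¹ * Ab * Ψ := by
    rw [Matrix.mul_assoc, Matrix.sub_mul, hnull, sub_zero, ← Matrix.mul_assoc]
  have kernel_part : Ψb * (Ψb - Ψ)ᴴ * Ψ = Ψb * Ψbᴴ * Ψ - Ψb := by
    rw [conjTranspose_sub, Matrix.mul_sub, Matrix.sub_mul, Matrix.mul_assoc Ψb Ψᴴ, horth,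
      Matrix.mul_one]
  calc Ψb - Ψ
      = Ψb - (Abᴴ * (Ab * Abᴴ)⁻¹ * Ab * Ψ + Ψb * Ψbᴴ * Ψ) := by rw [resolution]
    _ = -(Abᴴ * (Ab * Abᴴ)⁻¹ * Ab * Ψ) - (Ψb * Ψbᴴ * Ψ - Ψb) := by abel
    _ = -(Abᴴ * (Ab * Abᴴ)⁻¹ * (Ab - A) * Ψ) - Ψb * (Ψb - Ψ)ᴴ * Ψ := by
      rw [range_part, kernel_part]

end ResolutionOfIdentity

section FullRowRank

variable {m n K : Type*} [Fintype m] [Fintype n] [DecidableEq m] [Field K]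

theorem isUnit_of_rank_eq_card {A : Matrix m m K} (hA : A.rank = Fintype.card m) :
    IsUnit A := by
  have range_eq_top : LinearMap.range A.mulVecLin = ⊤ :=
    Submodule.eq_top_of_finrank_eq (hA.trans (Module.finrank_fintype_fun_eq_card K).symm)
  exact mulVec_surjective_iff_isUnit.mp (LinearMap.range_eq_top.mp range_eq_top)

theorem isUnit_self_mul_conjTranspose_of_rank_eq_card
    [PartialOrder K] [StarRing K] [StarOrderedRing K]
    {A : Matrix m n K} (hA : A.rank = Fintype.card m) : IsUnit (A * Aᴴ) :=
  isUnit_of_rank_eq_card ((rank_self_mul_conjTranspose A).trans hA)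

end FullRowRank

/-- The exact perturbation identity (38) of the paper: with `ΔA = Ā − A`, `A Ψ = 0`,
`Ā Ψ̄ = 0`, orthonormal columns, and `Ā` of full row rank,
`ΔΨ = − Āᴴ(Ā Āᴴ)⁻¹ ΔA Ψ − Ψ̄ (ΔΨ)ᴴ Ψ`, where `ΔΨ = Ψ̄ − Ψ`. -/
theorem nullBasis_perturbation_identity (m n : ℕ) (hm : 0 < m) (hmn : m < n)
    (A Ab : Matrix (Fin m) (Fin n) ℂ) (hAbrank : Ab.rank = m)
    (Ψ Ψb : Matrix (Fin n) (Fin (n - m)) ℂ)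
    (horth : Ψᴴ * Ψ = 1) (horthb : Ψbᴴ * Ψb = 1)
    (hnull : A * Ψ = 0) (hnullb : Ab * Ψb = 0) :
    Ψb - Ψ = -(Abᴴ * (Ab * Abᴴ)⁻¹ * (Ab - A) * Ψ) - Ψb * (Ψb - Ψ)ᴴ * Ψ := by
  have hAb : IsUnit (Ab * Abᴴ) :=
    isUnit_self_mul_conjTranspose_of_rank_eq_card (by simpa using hAbrank)
  exact nullBasis_perturbation_identity_general (by simpa using Nat.add_sub_of_le hmn.le) hAb
    horth horthb hnull hnullb
end

section
/- Let K ≥ 1 and let M_1,…,M_K, N be positive integers with Σ_{j=1}^{K} M_j ≤ N. For j = 1,…,K let H_j ∈ ℂ^{M_j×N}, and assume the stacked matrix H = [H_1; …; H_K] ∈ ℂ^{(ΣM_j)×N} has full row rank. Fix k ∈ {1,…,K}, set d_k = N − Σ_{j≠k} M_j, and let Ψ_k ∈ ℂ^{N×d_k} be a matrix with orthonormal columns satisfying H_j Ψ_k = 0 for all j ≠ k. Then (a) the matrix H_k Ψ_k ∈ ℂ^{M_k×d_k} has full row rank, and (b) the block of columns of H^H (H H^H)^{-1} corresponding to the k-th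 row block of H equals Ψ_k (H_k Ψ_k)^H ( H_k Ψ_k (H_k Ψ_k)^H )^{-1}. -/
open Matrix
open scoped ComplexOrder

/-- The stacked multi-user channel matrix `H = [H_1; …; H_K]`, with rows indexed by the
sigma type `(j : Fin K) × Fin (M j)`. -/
def stackAll (K N : ℕ) (M : Fin K → ℕ)
    (H : (j : Fin K) → Matrix (Fin (M j)) (Fin N) ℂ) :
    Matrix ((j : Fin K) × Fin (M j)) (Fin N) ℂ :=
  Matrix.of fun p c => H p.1 p.2 c

/-!
Let `P` be the `k`-th column block of `Hᴴ(HHᴴ)⁻¹`. From `H_j P = 0` for `j ≠ k` and a dimension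
count, the columns of `P` lie in the range of `Ψ`, so `ΨΨᴴP = P`. Since `HΨ` vanishes outside its
`k`-th block `G = H_k Ψ`, also `ΨᴴP = GᴴB`, where `B` is the `k`-th diagonal block of `(HHᴴ)⁻¹`.
Hence `GGᴴB = H_k ΨΨᴴP = H_k P = 1`, which gives `B = (GGᴴ)⁻¹` and `P = ΨGᴴ(GGᴴ)⁻¹`. This `GGᴴ`
is the Schur complement in `HHᴴ` of the Gram matrix of the rows with `j ≠ k`.
-/

section Field

variable {R l m n d o : Type*} [Field R] [Fintype n]

theorem linearIndependent_row_iff_rank_eq_card [Fintype m] {A : Matrix m n R} :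
    LinearIndependent R A.row ↔ A.rank = Fintype.card m := by
  rw [linearIndependent_iff_card_eq_finrank_span, rank_eq_finrank_span_row, Set.finrank, eq_comm]

theorem rank_submatrix_eq_card_of_injective [Fintype l] [Fintype m] {A : Matrix m n R}
    (hA : A.rank = Fintype.card m) {f : l → m} (hf : Function.Injective f) :
    (A.submatrix f id).rank = Fintype.card l :=
  ((linearIndependent_row_iff_rank_eq_card.mpr hA).comp f hf).rank_matrix

variable [Fintype d] [DecidableEq d] {A : Matrix m n R} {Ψ : Matrix n d R} {Φ : Matrix d n R}

theorem range_mulVecLin_eq_ker_mulVecLin_of_mul_eq_zero (hΦΨ : Φ * Ψ = 1) (hAΨ : A * Ψ = 0)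
    (hdim : A.rank + Fintype.card d = Fintype.card n) :
    LinearMap.range Ψ.mulVecLin = LinearMap.ker A.mulVecLin := by
  have hle : LinearMap.range Ψ.mulVecLin ≤ LinearMap.ker A.mulVecLin := by
    rw [LinearMap.range_le_ker_iff, ← mulVecLin_mul, hAΨ, mulVecLin_zero]
  have hinj : Function.Injective Ψ.mulVecLin := by
    refine Function.LeftInverse.injective (g := (Φ *ᵥ ·)) fun x => ?_
    simp only [mulVecLin_apply, mulVec_mulVec, hΦΨ, one_mulVec]
  have hrange := LinearMap.finrank_range_of_inj hinj
  have hker := A.mulVecLin.finrank_range_add_finrank_ker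
  rw [Module.finrank_fintype_fun_eq_card] at hrange hker
  refine Submodule.eq_of_le_of_finrank_eq hle ?_
  rw [rank] at hdim
  omega

theorem mul_mul_eq_self_of_mul_eq_zero (hΦΨ : Φ * Ψ = 1) (hAΨ : A * Ψ = 0)
    (hdim : A.rank + Fintype.card d = Fintype.card n) {P : Matrix n o R} (hAP : A * P = 0) :
    Ψ * (Φ * P) = P := by
  refine Matrix.ext_col fun c => ?_
  have hmem : P.col c ∈ LinearMap.range Ψ.mulVecLin := by
    rw [range_mulVecLin_eq_ker_mulVecLin_of_mul_eq_zero hΦΨ hAΨ hdim]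
    exact congrArg (fun B => B.col c) hAP
  obtain ⟨x, hx : Ψ *ᵥ x = P.col c⟩ := hmem
  calc Ψ *ᵥ (Φ *ᵥ P.col c) = Ψ *ᵥ x := by rw [← hx, mulVec_mulVec x, hΦΨ, one_mulVec]
    _ = P.col c := hx

end Field

theorem submatrix_mul_submatrix_of_col_eq_zero {R l m n p : Type*} [NonUnitalNonAssocSemiring R]
    [Fintype m] [Fintype p] (e : p ↪ m) {A : Matrix l m R} (hA : ∀ i ∉ Set.range e, A.col i = 0)
    (B : Matrix m n R) : A.submatrix id e * B.submatrix e id = A * B := by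
  ext a b
  refine Fintype.sum_of_injective e e.injective _ _ (fun i hi => ?_) fun _ => rfl
  have hzero : A a i = 0 := congrFun (hA i hi) a
  simp only [hzero, zero_mul]

section RightPinv

variable {R m n p d : Type*} [Field R] [StarRing R] [Fintype m] [DecidableEq m] [Fintype n]

/-- The Moore–Penrose pseudo-inverse `A⁺ = Aᴴ(AAᴴ)⁻¹` of a matrix of full row rank. When `AAᴴ` is
singular, its inverse is the junk value `0`, and this is not the pseudo-inverse of `A`. -/
noncomputable def rightPinv (A : Matrix m n R) : Matrix n m R :=
  Aᴴ * (A * Aᴴ)⁻¹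

theorem conjTranspose_mul_rightPinv_submatrix [Fintype p] {H : Matrix m n R} {e : p ↪ m}
    {Ψ : Matrix n d R} (hnull : ∀ i ∉ Set.range e, (H * Ψ).row i = 0) :
    Ψᴴ * (rightPinv H).submatrix id e =
      (H.submatrix e id * Ψ)ᴴ * (H * Hᴴ)⁻¹.submatrix e e := by
  have hcol : ∀ i ∉ Set.range e, (H * Ψ)ᴴ.col i = 0 := fun i hi =>
    funext fun a => (congrArg star (congrFun (hnull i hi) a)).trans (star_zero R)
  calc Ψᴴ * (rightPinv H).submatrix id e
      = (Ψᴴ * (Hᴴ * (H * Hᴴ)⁻¹)).submatrix id e := rfl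
    _ = (H * Ψ)ᴴ * (H * Hᴴ)⁻¹.submatrix id e := by
      rw [← Matrix.mul_assoc, ← conjTranspose_mul]
      rfl
    _ = (H.submatrix e id * Ψ)ᴴ * (H * Hᴴ)⁻¹.submatrix e e :=
      (submatrix_mul_submatrix_of_col_eq_zero e hcol _).symm

variable [PartialOrder R] [StarOrderedRing R]

theorem isUnit_self_mul_conjTranspose_iff_rank_eq_card {A : Matrix m n R} :
    IsUnit (A * Aᴴ) ↔ A.rank = Fintype.card m := by
  rw [← linearIndependent_rows_iff_isUnit, linearIndependent_row_iff_rank_eq_card,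
    rank_self_mul_conjTranspose]

theorem mul_rightPinv {A : Matrix m n R} (hA : A.rank = Fintype.card m) :
    A * rightPinv A = 1 := by
  have hunit := isUnit_self_mul_conjTranspose_iff_rank_eq_card.mpr hA
  rw [rightPinv, ← Matrix.mul_assoc, mul_nonsing_inv _ ((isUnit_iff_isUnit_det _).mp hunit)]

variable [Fintype p] [Fintype d] [DecidableEq d]
  {H : Matrix m n R} {e : p ↪ m} {Ψ : Matrix n d R}

theorem mul_conjTranspose_mul_rightPinv_submatrix (hH : H.rank = Fintype.card m)
    (hcard : Fintype.card d + Fintype.card m = Fintype.card n + Fintype.card p)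
    (horth : Ψᴴ * Ψ = 1) (hnull : ∀ i ∉ Set.range e, (H * Ψ).row i = 0) :
    Ψ * (Ψᴴ * (rightPinv H).submatrix id e) = (rightPinv H).submatrix id e := by
  classical
  let others : ↥(Set.range e)ᶜ → m := Subtype.val
  have hrank : (H.submatrix others id).rank + Fintype.card d = Fintype.card n := by
    rw [rank_submatrix_eq_card_of_injective hH Subtype.val_injective, Fintype.card_compl_set,
      Fintype.card_range]
    have := Fintype.card_le_of_embedding e
    omega
  have hothers : H.submatrix others id * Ψ = 0 := Matrix.ext_row fun i => hnull i i.2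
  refine mul_mul_eq_self_of_mul_eq_zero horth hothers hrank ?_
  calc H.submatrix others id * (rightPinv H).submatrix id e
      = (H * rightPinv H).submatrix others e := rfl
    _ = (1 : Matrix m m R).submatrix others e := by rw [mul_rightPinv hH]
    _ = 0 := by
      ext i c
      exact one_apply_ne fun h => i.2 ⟨c, h.symm⟩

variable [DecidableEq p]

theorem gram_mul_inv_submatrix_eq_one (hH : H.rank = Fintype.card m)
    (hcard : Fintype.card d + Fintype.card m = Fintype.card n + Fintype.card p)
    (horth : Ψᴴ * Ψ = 1) (hnull : ∀ i ∉ Set.range e, (H * Ψ).row i = 0) :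
    H.submatrix e id * Ψ * (H.submatrix e id * Ψ)ᴴ * (H * Hᴴ)⁻¹.submatrix e e = 1 := by
  rw [Matrix.mul_assoc, ← conjTranspose_mul_rightPinv_submatrix hnull, Matrix.mul_assoc,
    mul_conjTranspose_mul_rightPinv_submatrix hH hcard horth hnull]
  calc H.submatrix e id * (rightPinv H).submatrix id e
      = (H * rightPinv H).submatrix e e := rfl
    _ = 1 := by rw [mul_rightPinv hH, submatrix_one_embedding]

theorem zf_precoder_identity_general (hH : H.rank = Fintype.card m)
    (hcard : Fintype.card d + Fintype.card m = Fintype.card n + Fintype.card p)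
    (horth : Ψᴴ * Ψ = 1) (hnull : ∀ i ∉ Set.range e, (H * Ψ).row i = 0) :
    (H.submatrix e id * Ψ).rank = Fintype.card p ∧
    (rightPinv H).submatrix id e = Ψ * rightPinv (H.submatrix e id * Ψ) := by
  have hgram := gram_mul_inv_submatrix_eq_one hH hcard horth hnull
  refine ⟨isUnit_self_mul_conjTranspose_iff_rank_eq_card.mp (.of_mul_eq_one _ hgram), ?_⟩
  rw [rightPinv.eq_def (H.submatrix e id * Ψ), inv_eq_right_inv hgram,
    ← conjTranspose_mul_rightPinv_submatrix hnull,
    mul_conjTranspose_mul_rightPinv_submatrix hH hcard horth hnull]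

end RightPinv

/-- The zero-forcing / block-diagonalization identity proved via the Schur complement in
Appendix A of the paper: if the stacked channel `H` has full row rank and `Ψ_k` is an
orthonormal basis of the common null space of all `H_j`, `j ≠ k`, then (a) `H_k Ψ_k` has
full row rank, and (b) the `k`-th column block of `Hᴴ(H Hᴴ)⁻¹` equals
`Ψ_k (H_k Ψ_k)ᴴ (H_k Ψ_k (H_k Ψ_k)ᴴ)⁻¹`. -/
theorem zf_precoder_identity (K N : ℕ) (hK : 1 ≤ K) (hN : 0 < N)
    (M : Fin K → ℕ) (hM : ∀ j, 0 < M j) (hsum : ∑ j, M j ≤ N)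
    (H : (j : Fin K) → Matrix (Fin (M j)) (Fin N) ℂ)
    (hrank : (stackAll K N M H).rank = ∑ j, M j)
    (k : Fin K)
    (Ψ : Matrix (Fin N) (Fin (N - ∑ j ∈ Finset.univ.erase k, M j)) ℂ)
    (horth : Ψᴴ * Ψ = 1)
    (hnull : ∀ j, j ≠ k → H j * Ψ = 0) :
    (H k * Ψ).rank = M k ∧
    ∀ (i : Fin N) (c : Fin (M k)),
      ((stackAll K N M H)ᴴ * (stackAll K N M H * (stackAll K N M H)ᴴ)⁻¹) i ⟨k, c⟩
        = (Ψ * (H k * Ψ)ᴴ * (H k * Ψ * (H k * Ψ)ᴴ)⁻¹) i c := by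
  have hcard : Fintype.card (Fin (N - ∑ j ∈ Finset.univ.erase k, M j)) +
      Fintype.card ((j : Fin K) × Fin (M j)) = Fintype.card (Fin N) + Fintype.card (Fin (M k)) := by
    have := Finset.sum_erase_add Finset.univ M (Finset.mem_univ k)
    simp only [Fintype.card_sigma, Fintype.card_fin]
    omega
  have hothers : ∀ p ∉ Set.range (Function.Embedding.sigmaMk (β := fun j => Fin (M j)) k),
      (stackAll K N M H * Ψ).row p = 0 := fun ⟨j, a⟩ hp =>
    congrFun (hnull j fun hj => hp (by subst hj; exact ⟨a, rfl⟩)) a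
  obtain ⟨hrow, hblock⟩ :=
    zf_precoder_identity_general (hrank.trans (by simp)) hcard horth hothers
  refine ⟨hrow.trans (Fintype.card_fin _), fun i c => ?_⟩
  rw [Matrix.mul_assoc]
  exact congrFun₂ hblock i c
end
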